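/- arXiv:1804.09684 — 4 statements merged into one kernel-verified Lean document; each statement's English description precedes it below -/
import Mathlib

section
/- For every integer c ≥ 1 there exist constants K and C₀, depending only on c, such that the following holds. For every finite alphabet Σ, every finite set X ⊆ Σ^c with |X| = m, every integer s ≥ 1 with s^c ≤ (4/5)·m, and every integer k ≥ max(s−1, 5), the number of s-tuples (x_1,…,x_s) ∈ X^s for which there exist k distinct keys y_1,…,y_k ∈ X ∖ {x_1,…,x_s}, each lying in the F₂-linear span of x_1,…,x_s (i.e., each y_j satisfies y_j ⊕ ⊕_{i∈I} x_i = ∅ for some subset I ⊆ {1,…,s}), is at most C₀ · s^K · m^{s−3/2}. -/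
/-!
Write `m = |X|`. The basic estimate is that, for finite sets `B_o` of keys, at most
`((n - 1)‼)^c * ∏ √|B_o|` tuples `w` of length `n` with `w o ∈ B_o` have zero `F₂`-sum
(`card_even_le`). For keys with one character this follows by deleting the first entry together
with an equal one and applying Cauchy–Schwarz to the deleted pair; positions are then added one at
a time, in the weighted form `even_key_sum_le`.

If some `y ∈ X` equals `∑ i ∈ I, x i`, then `|I|` is odd, and `|I| ≠ 1` when `y` is not one of the
`x i`.

* If `|I| = r ≥ 5`, the basic estimate gives at most `(r‼)^c * m^(s - (r - 1) / 2)` tuples for each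
  `I`. The factor `choose s r * (r‼)^c` is superpolynomial in `s`, but for `c ≥ 2` the inequality
  `(r‼)^2 ≤ (r + 1)!` and the hypothesis `s^c ≤ m` bound it by
  `2 * s^(3c) * m^((r - 5) / 2)`, so these tuples number at most `poly(s) * m^(s - 2)`
  (`sum_card_depSet_le`).
* Otherwise there are `k ≥ max (s - 1) 5` distinct triples. Triples pairwise sharing two elements
  all contain a common pair (at most `s - 2` of them) or lie in a common 4-set (at most `4`), so two
  of the triples, `I` and `J`, share at most one element (`exists_small_inter`). Restricting a tuple
  to the complement of two elements of `I \ J` leaves the condition on `J` intact, which costs a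
  factor `3^c / m`; the basic estimate with one singleton bounds the number of extensions by
  `3^c * m^(3/2)` instead of `m^2`. Hence there are at most `9^c * m^(s - 3/2)` such tuples for each
  of the at most `s^6` pairs (`card_depSet_inter_le`).

For `c = 1` distinct keys have disjoint supports, and no tuple qualifies.
-/

/-- A key `x : Fin c → A` viewed as a vector of the `F₂`-vector space indexed by
position characters `Fin c × A`. -/
def keyVec {c : ℕ} {A : Type*} [DecidableEq A] (x : Fin c → A) : Fin c × A → ZMod 2 :=
  fun p => if x p.1 = p.2 then 1 else 0

/-! ### Counting tuples with zero sum -/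

open Finset Nat in
/-- Keys with one character, weighted: `n - 1` choices for the entry cancelling the first one, each
costing a Cauchy–Schwarz, account for the recursion of the double factorial. For odd `n` the left
side vanishes. -/
theorem even_tuple_sum_le {A : Type*} [Fintype A] [DecidableEq A] :
    ∀ (n : ℕ) (f : Fin n → A → ℝ), (∀ i a, 0 ≤ f i a) →
      ∑ α : Fin n → A, (if ∀ a, ∑ i, (if α i = a then (1 : ZMod 2) else 0) = 0
          then ∏ i, f i (α i) else 0) ≤
        ((n - 1)‼ : ℝ) * ∏ i, √(∑ a, f i a ^ 2) := by
  intro n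
  induction n using Nat.twoStepInduction with
  | zero => intro f hf; simp
  | one =>
    intro f hf
    have h : ∀ α : Fin 1 → A, ¬ ∀ a, ∑ i, (if α i = a then (1 : ZMod 2) else 0) = 0 := by
      intro α h
      simpa only [univ_unique, sum_singleton, Fin.default_eq_zero, if_true, one_ne_zero] using h (α 0)
    simp only [h, if_false, sum_const_zero]
    positivity
  | more n ih _ =>
    intro f hf
    -- some entry `j` of `β` equals `a`, and deleting the pair keeps all multiplicities even
    have hpt : ∀ (a : A) (β : Fin (n + 1) → A),
        (if ∀ a', ∑ i, (if (Fin.cons a β : Fin (n + 2) → A) i = a' then (1 : ZMod 2) else 0) = 0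
          then ∏ i, f i ((Fin.cons a β : Fin (n + 2) → A) i) else 0) ≤
        ∑ j : Fin (n + 1), (if β j = a ∧
            ∀ a', ∑ i, (if β (j.succAbove i) = a' then (1 : ZMod 2) else 0) = 0
          then f 0 a * (f j.succ (β j) * ∏ i, f (j.succAbove i).succ (β (j.succAbove i)))
          else 0) := by
      intro a β
      have hnn : ∀ j ∈ (univ : Finset (Fin (n + 1))), 0 ≤ (if β j = a ∧
            ∀ a', ∑ i, (if β (j.succAbove i) = a' then (1 : ZMod 2) else 0) = 0
          then f 0 a * (f j.succ (β j) * ∏ i, f (j.succAbove i).succ (β (j.succAbove i)))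
          else 0) := by
        intro j _
        split_ifs
        · exact mul_nonneg (hf _ _) (mul_nonneg (hf _ _) (prod_nonneg fun i _ => hf _ _))
        · exact le_rfl
      split_ifs with h
      · have hex : ∃ j, β j = a := by
          by_contra! hne
          have := h a
          rw [Fin.sum_univ_succ] at this
          simp [hne] at this
        obtain ⟨j, hj⟩ := hex
        refine le_trans (le_of_eq ?_) (single_le_sum hnn (mem_univ j))
        rw [if_pos]
        · rw [Fin.prod_univ_succ, Fin.prod_univ_succAbove _ j]
          simp
        · refine ⟨hj, fun a' => ?_⟩
          have := h a'
          rw [Fin.sum_univ_succ, Fin.sum_univ_succAbove _ j] at this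
          simp only [Fin.cons_zero, Fin.cons_succ, hj] at this
          rw [← add_assoc, CharTwo.add_self_eq_zero, zero_add] at this
          exact this
      · exact sum_nonneg hnn
    have hsplit : ∀ F : (Fin (n + 2) → A) → ℝ, ∑ α, F α =
        ∑ a, ∑ β : Fin (n + 1) → A, F (Fin.cons a β) := by
      intro F
      rw [← (Fin.consEquiv (fun _ : Fin (n + 2) => A)).sum_comp, Fintype.sum_prod_type]
      rfl
    have hsplit' : ∀ (j : Fin (n + 1)) (F : (Fin (n + 1) → A) → ℝ), ∑ β, F β =
        ∑ b, ∑ γ : Fin n → A, F (j.insertNth b γ) := by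
      intro j F
      rw [← (Fin.insertNthEquiv (fun _ : Fin (n + 1) => A) j).sum_comp, Fintype.sum_prod_type]
      rfl
    rw [hsplit]
    have key : ∀ j : Fin (n + 1), ∑ a, ∑ β : Fin (n + 1) → A, (if β j = a ∧
            ∀ a', ∑ i, (if β (j.succAbove i) = a' then (1 : ZMod 2) else 0) = 0
          then f 0 a * (f j.succ (β j) * ∏ i, f (j.succAbove i).succ (β (j.succAbove i)))
          else 0) ≤ ((n - 1)‼ : ℝ) * ∏ i, √(∑ a, f i a ^ 2) := by
      intro j
      have e : ∀ a, ∑ β : Fin (n + 1) → A, (if β j = a ∧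
            ∀ a', ∑ i, (if β (j.succAbove i) = a' then (1 : ZMod 2) else 0) = 0
          then f 0 a * (f j.succ (β j) * ∏ i, f (j.succAbove i).succ (β (j.succAbove i)))
          else 0) = (f 0 a * f j.succ a) * ∑ γ : Fin n → A,
            (if ∀ a', ∑ i, (if γ i = a' then (1 : ZMod 2) else 0) = 0
              then ∏ i, f (j.succAbove i).succ (γ i) else 0) := by
        intro a
        rw [hsplit' j, sum_eq_single a]
        · simp only [Fin.insertNth_apply_same, Fin.insertNth_apply_succAbove, true_and, mul_sum]
          refine sum_congr rfl fun γ _ => ?_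
          split_ifs <;> ring
        · intro b _ hb
          simp [hb]
        · simp
      simp only [e]
      rw [← sum_mul, Fin.prod_univ_succ, Fin.prod_univ_succAbove _ j]
      have h1 := Real.sum_mul_le_sqrt_mul_sqrt univ (f 0) (f j.succ)
      have h2 := ih (fun i => f (j.succAbove i).succ) (fun i a => hf _ _)
      calc _ ≤ (√(∑ a, f 0 a ^ 2) * √(∑ a, f j.succ a ^ 2)) *
            (((n - 1)‼ : ℝ) * ∏ i, √(∑ a, f (j.succAbove i).succ a ^ 2)) := by
            refine mul_le_mul h1 h2 ?_ (by positivity)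
            refine sum_nonneg fun γ _ => ?_
            split_ifs
            · exact prod_nonneg fun i _ => hf _ _
            · exact le_rfl
        _ = _ := by ring
    have hdf : ((n + 2 - 1)‼ : ℝ) = (n + 1) * (n - 1)‼ := by
      rcases n with _ | n
      · simp
      · simp only [Nat.add_sub_cancel, show n + 1 + 2 - 1 = n + 2 by omega]
        rw [Nat.doubleFactorial_add_two]; push_cast; ring
    calc _ ≤ ∑ a, ∑ β : Fin (n + 1) → A, _ := sum_le_sum fun a _ => sum_le_sum fun β _ => hpt a β
      _ = ∑ j : Fin (n + 1), ∑ a, ∑ β : Fin (n + 1) → A, _ := by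
        rw [sum_comm' (t' := univ) (s' := fun _ => univ) (by simp)]
        rw [sum_comm]
        simp only [sum_comm (s := univ (α := Fin (n + 1) → A)) (t := univ (α := Fin (n + 1)))]
        rw [sum_comm]
      _ ≤ ∑ j : Fin (n + 1), _ := sum_le_sum fun j _ => key j
      _ = _ := by rw [hdf]; simp; ring

open Finset Nat in
/-- Induction on the number `c` of positions: for fixed first characters `α`, the inner sum is bounded
by the `ℓ²`-norms of the slices `f i (α i, ·)`, which serve as weights for `even_tuple_sum_le`. -/
theorem even_key_sum_le {A : Type*} [Fintype A] [DecidableEq A] (n : ℕ) :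
    ∀ (c : ℕ) (f : Fin n → (Fin c → A) → ℝ), (∀ i x, 0 ≤ f i x) →
      ∑ x : Fin n → Fin c → A,
          (if ∀ p a, ∑ i, (if x i p = a then (1 : ZMod 2) else 0) = 0
            then ∏ i, f i (x i) else 0) ≤
        ((n - 1)‼ : ℝ) ^ c * ∏ i, √(∑ z, f i z ^ 2) := by
  intro c
  induction c with
  | zero =>
    intro f hf
    simp only [IsEmpty.forall_iff, if_true, pow_zero, one_mul, univ_unique, sum_singleton]
    simp only [Real.sqrt_sq (hf _ _)]
    exact le_of_eq (prod_congr rfl fun i _ => congrArg _ (Subsingleton.elim _ _))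
  | succ c ih =>
    intro f hf
    let e : (Fin n → A) × (Fin n → Fin c → A) ≃ (Fin n → Fin (c + 1) → A) :=
      (Equiv.arrowProdEquivProdArrow (Fin n) (fun _ => A) (fun _ => Fin c → A)).symm.trans
        (Equiv.piCongrRight fun _ => Fin.consEquiv (fun _ : Fin (c + 1) => A))
    have he : ∀ α x i, e (α, x) i = Fin.cons (α i) (x i) := fun _ _ _ => rfl
    have hg : ∀ i a, (0 : ℝ) ≤ √(∑ z : Fin c → A, f i (Fin.cons a z) ^ 2) :=
      fun i a => Real.sqrt_nonneg _
    rw [← e.sum_comp, Fintype.sum_prod_type]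
    have h1 : ∀ α : Fin n → A, ∑ x : Fin n → Fin c → A,
        (if ∀ p a, ∑ i, (if e (α, x) i p = a then (1 : ZMod 2) else 0) = 0
            then ∏ i, f i (e (α, x) i) else 0) ≤
        ((n - 1)‼ : ℝ) ^ c * (if ∀ a, ∑ i, (if α i = a then (1 : ZMod 2) else 0) = 0
          then ∏ i, √(∑ z : Fin c → A, f i (Fin.cons (α i) z) ^ 2) else 0) := by
      intro α
      simp only [he, Fin.forall_fin_succ (n := c), Fin.cons_zero, Fin.cons_succ]
      by_cases h : ∀ a, ∑ i, (if α i = a then (1 : ZMod 2) else 0) = 0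
      · simp only [h, implies_true, true_and, if_true]
        exact ih (fun i z => f i (Fin.cons (α i) z)) (fun _ _ => hf _ _)
      · simp only [h, false_and, if_false, sum_const_zero, mul_zero, le_refl]
    refine (sum_le_sum fun α _ => h1 α).trans ?_
    rw [← mul_sum, pow_succ, mul_assoc]
    refine mul_le_mul_of_nonneg_left ?_ (by positivity)
    refine (even_tuple_sum_le n (fun i a => √(∑ z : Fin c → A, f i (Fin.cons a z) ^ 2)) hg).trans
      (le_of_eq ?_)
    congr 1
    refine prod_congr rfl fun i _ => ?_
    congr 1
    rw [← (Fin.consEquiv (fun _ : Fin (c + 1) => A)).sum_comp, Fintype.sum_prod_type]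
    refine sum_congr rfl fun a _ => ?_
    rw [Real.sq_sqrt (sum_nonneg fun z _ => sq_nonneg _)]
    rfl

open Finset Nat in
/-- The basic estimate: the case of indicator weights. -/
theorem card_even_le {κ : Type*} [Fintype κ] [DecidableEq κ] {c : ℕ} {A : Type*} [Fintype A] [DecidableEq A]
    (B : κ → Finset (Fin c → A)) :
    (#{w : κ → Fin c → A | (∀ o, w o ∈ B o) ∧ ∑ o, keyVec (w o) = 0} : ℝ) ≤
      ((Fintype.card κ - 1)‼ : ℝ) ^ c * ∏ o, √(#(B o) : ℝ) := by
  let e := Fintype.equivFin κ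
  have h := even_key_sum_le (A := A) (Fintype.card κ) c
    (fun i z => if z ∈ B (e.symm i) then 1 else 0) (fun i x => by split_ifs <;> norm_num)
  rw [← (e.arrowCongr (Equiv.refl (Fin c → A))).sum_comp] at h
  simp only [ite_pow, one_pow, ne_eq, OfNat.ofNat_ne_zero, not_false_eq_true, zero_pow,
    sum_ite_mem, univ_inter, sum_const, nsmul_eq_mul, mul_one] at h
  rw [e.symm.prod_comp (fun o => √(#(B o) : ℝ))] at h
  refine le_trans (le_of_eq ?_) h
  rw [card_filter, Nat.cast_sum]
  refine sum_congr rfl fun w _ => ?_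
  have h1 : (∀ p a, ∑ i, (if (e.arrowCongr (Equiv.refl (Fin c → A))) w i p = a
      then (1 : ZMod 2) else 0) = 0) ↔ ∑ o, keyVec (w o) = 0 := by
    have : ∀ p a, ∑ i, (if (e.arrowCongr (Equiv.refl (Fin c → A))) w i p = a
        then (1 : ZMod 2) else 0) = (∑ o, keyVec (w o)) (p, a) := by
      intro p a
      rw [← e.sum_comp]
      simp [keyVec, Finset.sum_apply]
    simp only [this, funext_iff, Prod.forall, Pi.zero_apply]
  have h2 : ∏ i, (if (e.arrowCongr (Equiv.refl (Fin c → A))) w i ∈ B (e.symm i)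
      then (1 : ℝ) else 0) = if ∀ o, w o ∈ B o then 1 else 0 := by
    rw [← e.prod_comp]
    simp [Finset.prod_ite_zero]
  rw [h2]
  by_cases p1 : ∑ o, keyVec (w o) = 0 <;> by_cases p2 : ∀ o, w o ∈ B o <;>
    simp only [h1, p1, p2, and_true, and_false, if_true, if_false, implies_true, Nat.cast_one, Nat.cast_zero]

/-! ### Families of triples -/

open Finset in
/-- A family of 3-sets pairwise meeting in two elements either shares a common pair, and then has at
most `s - 2` members, or lies in a 4-set, and then has at most `4`. -/
theorem exists_small_inter {s : ℕ} (F : Finset (Finset (Fin s))) (h3 : ∀ I ∈ F, #I = 3)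
    (hF : max (s - 1) 5 ≤ #F) : ∃ I ∈ F, ∃ J ∈ F, #(I ∩ J) ≤ 1 := by
  by_contra! hcon
  have h5 : 5 ≤ #F := le_trans (le_max_right _ _) hF
  obtain ⟨I, hI, J, hJ, hIJ⟩ := one_lt_card.1 (by omega : 1 < #F)
  have hI3 := h3 I hI
  have hJ3 := h3 J hJ
  have hI2 : #(I ∩ J) = 2 := by
    have h1 := hcon I hI J hJ
    have h2 : #(I ∩ J) ≤ 3 := hI3 ▸ card_le_card inter_subset_left
    by_contra hne
    have h4 : #(I ∩ J) = 3 := by omega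
    have e1 : I ∩ J = I := eq_of_subset_of_card_le inter_subset_left (by omega)
    have e2 : I ∩ J = J := eq_of_subset_of_card_le inter_subset_right (by omega)
    exact hIJ (e1.symm.trans e2)
  have hU : #(I ∪ J) = 4 := by
    have := card_union_add_card_inter I J
    omega
  -- a member leaving `I ∪ J` meets it exactly in `I ∩ J`
  have hout : ∀ L ∈ F, ¬ L ⊆ I ∪ J → L ∩ (I ∪ J) = I ∩ J := by
    intro L hL hLU
    have hlt : #(L ∩ (I ∪ J)) < 3 := by
      rw [← h3 L hL]
      exact card_lt_card ⟨inter_subset_left, fun h => hLU fun x hx => (mem_inter.1 (h hx)).2⟩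
    have a1 : L ∩ I = L ∩ (I ∪ J) := eq_of_subset_of_card_le
      (inter_subset_inter_left subset_union_left) (by have := hcon L hL I hI; omega)
    have a2 : L ∩ J = L ∩ (I ∪ J) := eq_of_subset_of_card_le
      (inter_subset_inter_left subset_union_right) (by have := hcon L hL J hJ; omega)
    refine eq_of_subset_of_card_le (fun x hx => ?_) ?_
    · rw [mem_inter]
      exact ⟨(mem_inter.1 (a1 ▸ hx : x ∈ L ∩ I)).2, (mem_inter.1 (a2 ▸ hx : x ∈ L ∩ J)).2⟩
    · rw [hI2, ← a1]
      exact hcon L hL I hI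
  by_cases hall : ∀ K ∈ F, I ∩ J ⊆ K
  · have hsub : F ⊆ (I ∩ J)ᶜ.image (fun e => insert e (I ∩ J)) := by
      intro K hK
      have hd : #(K \ (I ∩ J)) = 1 := by
        rw [card_sdiff_of_subset (hall K hK), h3 K hK, hI2]
      obtain ⟨e, he⟩ := card_eq_one.1 hd
      have he' : e ∈ K \ (I ∩ J) := he ▸ mem_singleton_self e
      refine mem_image.2 ⟨e, mem_compl.2 (mem_sdiff.1 he').2, ?_⟩
      rw [insert_eq, ← he, sdiff_union_of_subset (hall K hK)]
    have h1 := (card_le_card hsub).trans card_image_le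
    rw [card_compl, Fintype.card_fin, hI2] at h1
    have h2 : s - 1 ≤ #F := le_trans (le_max_left _ _) hF
    omega
  · push Not at hall
    obtain ⟨K, hK, hKn⟩ := hall
    have hKU : K ⊆ I ∪ J := by
      by_contra h
      exact hKn (hout K hK h ▸ inter_subset_left)
    have hsub : F ⊆ powersetCard 3 (I ∪ J) := by
      intro L hL
      refine mem_powersetCard.2 ⟨?_, h3 L hL⟩
      by_contra h
      have hLU := hout L hL h
      have h1 : K ∩ L ⊆ I ∩ J := by
        intro x hx
        rw [← hLU]
        exact mem_inter.2 ⟨(mem_inter.1 hx).2, hKU (mem_inter.1 hx).1⟩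
      have h2 := eq_of_subset_of_card_le h1 (by have := hcon K hK L hL; omega)
      exact hKn (h2 ▸ inter_subset_left)
    have h1 := card_le_card hsub
    rw [card_powersetCard, hU] at h1
    have : Nat.choose 4 3 = 4 := by decide
    omega

/-! ### A bound on double factorials -/

open Nat in
/-- Since `(r‼)^2 ≤ r‼ * (r + 1)‼ = (r + 1)!`, two of the `c` powers of `r‼` are absorbed by
`choose s r * r! ≤ s^r`; each of the others is at most `s^((r + 1) / 2)`. Here `r = 2 * u + 5`. -/
theorem choose_mul_doubleFactorial_pow_le {s c u m : ℕ} (hc : 2 ≤ c) (hr : 2 * u + 5 ≤ s)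
    (hm : s ^ c ≤ m) :
    s.choose (2 * u + 5) * (2 * u + 5)‼ ^ c ≤ 2 * s ^ (3 * c) * m ^ u := by
  have h1 : (2 * u + 5)‼ ≤ s ^ (u + 3) := by
    have : ∀ v, 2 * v + 1 ≤ s → (2 * v + 1)‼ ≤ s ^ (v + 1) := by
      intro v
      induction v with
      | zero => intro h; simpa using h
      | succ v ih =>
        intro h
        rw [show 2 * (v + 1) + 1 = 2 * v + 1 + 2 by ring, Nat.doubleFactorial_add_two, pow_succ,
          mul_comm]
        exact Nat.mul_le_mul (ih (by omega)) (by omega)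
    exact this (u + 2) (by omega)
  have h2 : s.choose (2 * u + 5) * (2 * u + 5)‼ ^ 2 ≤ 2 * s ^ (2 * (u + 3)) := by
    have e1 : (2 * u + 5)‼ ^ 2 ≤ (2 * u + 6) * (2 * u + 5)! := by
      have : (2 * u + 5)‼ ≤ (2 * u + 6)‼ := by
        have : ∀ v, (2 * v + 1)‼ ≤ (2 * v + 2)‼ := by
          intro v
          induction v with
          | zero => decide
          | succ v ih =>
            rw [show 2 * (v + 1) + 1 = 2 * v + 1 + 2 by ring, Nat.doubleFactorial_add_two,
              show 2 * (v + 1) + 2 = 2 * v + 2 + 2 by ring, Nat.doubleFactorial_add_two]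
            exact Nat.mul_le_mul (by omega) ih
        exact this (u + 2)
      calc (2 * u + 5)‼ ^ 2 ≤ (2 * u + 6)‼ * (2 * u + 5)‼ := by
            rw [sq]; exact Nat.mul_le_mul_right _ this
        _ = (2 * u + 5 + 1)! := (Nat.factorial_eq_mul_doubleFactorial (2 * u + 5)).symm
        _ = _ := Nat.factorial_succ _
    have e2 : s.choose (2 * u + 5) * (2 * u + 5)! ≤ s ^ (2 * u + 5) := by
      rw [mul_comm, ← Nat.descFactorial_eq_factorial_mul_choose]
      exact Nat.descFactorial_le_pow _ _
    calc _ ≤ s.choose (2 * u + 5) * ((2 * u + 6) * (2 * u + 5)!) := Nat.mul_le_mul_left _ e1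
      _ = (2 * u + 6) * (s.choose (2 * u + 5) * (2 * u + 5)!) := by ring
      _ ≤ (2 * s) * s ^ (2 * u + 5) := Nat.mul_le_mul (by omega) e2
      _ = _ := by ring
  obtain ⟨d, rfl⟩ := Nat.exists_eq_add_of_le hc
  calc _ = (s.choose (2 * u + 5) * (2 * u + 5)‼ ^ 2) * ((2 * u + 5)‼) ^ d := by ring
    _ ≤ (2 * s ^ (2 * (u + 3))) * (s ^ (u + 3)) ^ d :=
        Nat.mul_le_mul h2 (Nat.pow_le_pow_left h1 _)
    _ = 2 * s ^ (3 * (2 + d)) * (s ^ (2 + d)) ^ u := by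
        simp only [← pow_mul, mul_assoc, ← pow_add]; congr 2; ring
    _ ≤ _ := Nat.mul_le_mul_left _ (Nat.pow_le_pow_left hm _)

/-! ### Dependent tuples -/

open scoped Classical in
/-- The tuples over `X` for which the `F₂`-sum of the entries indexed by `I` is a key of `X`. The key
is allowed to be one of the entries. -/
noncomputable def depSet {ι : Type*} [Fintype ι] {c : ℕ} {A : Type*} [DecidableEq A]
    (X : Finset (Fin c → A)) (I : Finset ι) : Finset (ι → Fin c → A) :=
  {x ∈ Fintype.piFinset fun _ => X | ∃ y ∈ X, keyVec y = ∑ i ∈ I, keyVec (x i)}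

theorem mem_depSet {ι : Type*} [Fintype ι] {c : ℕ} {A : Type*} [DecidableEq A]
    {X : Finset (Fin c → A)} {I : Finset ι} {x : ι → Fin c → A} :
    x ∈ depSet X I ↔ (∀ i, x i ∈ X) ∧ ∃ y ∈ X, keyVec y = ∑ i ∈ I, keyVec (x i) := by
  classical
  simp [depSet]

open Finset Nat in
/-- Tuples of `depSet X I` with prescribed entries outside `Q ⊆ I`. Adjoining the key `y` (index
`none`) gives a zero-sum tuple indexed by `Option I`, to which the basic estimate applies with
singletons at the indices of `I` outside `Q`. -/
theorem card_fiber_le {ι : Type*} [Fintype ι] [DecidableEq ι] {c : ℕ} {A : Type*} [Fintype A] [DecidableEq A]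
    (X : Finset (Fin c → A)) (I Q : Finset ι) (hQ : Q ⊆ I) (x₀ : ι → Fin c → A) :
    (#{x ∈ depSet X I | ∀ i ∉ Q, x i = x₀ i} : ℝ) ≤
      ((#I)‼ : ℝ) ^ c * √(#X : ℝ) ^ (#Q + 1) := by
  let B : Option I → Finset (Fin c → A) := fun o =>
    o.elim X fun i => if i.1 ∈ Q then X else {x₀ i.1}
  have hB := card_even_le B
  have hprod : ∏ o, √(#(B o) : ℝ) = √(#X : ℝ) ^ (#Q + 1) := by
    have h1 : ∀ i : I, √(#(B (some i)) : ℝ) = if i.1 ∈ Q then √(#X : ℝ) else 1 := by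
      intro i
      by_cases h : i.1 ∈ Q <;> simp [B, h]
    rw [Fintype.prod_option, prod_congr rfl fun i _ => h1 i,
      prod_coe_sort I (fun i => if i ∈ Q then √(#X : ℝ) else 1), prod_ite_mem,
      inter_eq_right.2 hQ, prod_const, pow_succ, mul_comm]
    rfl
  rw [hprod, Fintype.card_option, Fintype.card_coe, Nat.add_sub_cancel] at hB
  refine le_trans ?_ hB
  rcases (depSet X I).eq_empty_or_nonempty with h0 | ⟨x₁, hx₁⟩
  · simp [h0]
  have hne : Nonempty (Fin c → A) := let ⟨y, _⟩ := (mem_depSet.1 hx₁).2; ⟨y⟩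
  choose! y hy using fun x (hx : x ∈ depSet X I) => (mem_depSet.1 hx).2
  refine Nat.cast_le.2 (card_le_card_of_injOn
    (fun x o => o.elim (y x) fun i : I => x i.1) ?_ ?_)
  · intro x hx
    obtain ⟨hxd, hx0⟩ := mem_filter.1 hx
    obtain ⟨hyX, hys⟩ := hy x hxd
    refine mem_coe.2 (mem_filter.2 ⟨mem_univ _, ?_, ?_⟩)
    · rintro (_ | i)
      · exact hyX
      · by_cases h : i.1 ∈ Q
        · simpa [B, h] using (mem_depSet.1 hxd).1 i
        · simpa [B, h] using hx0 i h
    · rw [Fintype.sum_option]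
      simp only [Option.elim_none, Option.elim_some]
      rw [sum_coe_sort I (fun i => keyVec (x i)), hys]
      funext p
      exact CharTwo.add_self_eq_zero _
  · intro x hx x' hx' h
    obtain ⟨hxd, hx0⟩ := mem_filter.1 hx
    obtain ⟨hxd', hx0'⟩ := mem_filter.1 hx'
    funext i
    by_cases hi : i ∈ Q
    · exact congrFun h (some ⟨i, hQ hi⟩)
    · rw [hx0 i hi, hx0' i hi]

open Finset in
/-- Counting through the restriction of tuples to the complement of `Q`. -/
theorem card_le_mul_of_fiber {ι K : Type*} [Fintype ι] [DecidableEq ι] [DecidableEq K] (S : Finset (ι → K))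
    (Q : Finset ι) (R : Finset ({i // i ∉ Q} → K)) (hR : ∀ x ∈ S, (fun i => x i.1) ∈ R) (C : ℝ)
    (hC : 0 ≤ C) (hfib : ∀ x₀ ∈ S, (#{x ∈ S | ∀ i ∉ Q, x i = x₀ i} : ℝ) ≤ C) :
    (#S : ℝ) ≤ #R * C := by
  rw [card_eq_sum_card_fiberwise (f := fun x (i : {i // i ∉ Q}) => x i.1) (t := R)
    (fun x hx => hR x hx),
    Nat.cast_sum, ← nsmul_eq_mul]
  refine sum_le_card_nsmul _ _ _ fun v _ => ?_
  by_cases h : ∃ x₀ ∈ S, (fun i : {i // i ∉ Q} => x₀ i.1) = v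
  · obtain ⟨x₀, hx₀, rfl⟩ := h
    refine le_trans (le_of_eq ?_) (hfib x₀ hx₀)
    congr 2
    refine filter_congr fun x _ => ?_
    simp [funext_iff]
  · push Not at h
    rw [filter_false_of_mem h]
    simpa using hC

open Finset Nat in
/-- Compared with the `|X|^|ι|` tuples over `X`, the condition on `I` saves a factor
`|X|^((|I| - 1) / 2)`. -/
theorem card_depSet_le {ι : Type*} [Fintype ι] [DecidableEq ι] {c : ℕ} {A : Type*} [Fintype A] [DecidableEq A]
    (X : Finset (Fin c → A)) (I : Finset ι) :
    (#(depSet X I) : ℝ) ≤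
      (#X : ℝ) ^ (Fintype.card ι - #I) * (((#I)‼ : ℝ) ^ c * √(#X : ℝ) ^ (#I + 1)) := by
  classical
  have h := card_le_mul_of_fiber (depSet X I) I (Fintype.piFinset fun _ => X)
    (fun x hx => Fintype.mem_piFinset.2 fun i => (mem_depSet.1 hx).1 i)
    (((#I)‼ : ℝ) ^ c * √(#X : ℝ) ^ (#I + 1)) (by positivity)
    (fun x₀ _ => card_fiber_le X I I subset_rfl x₀)
  have hcard : Fintype.card {i // i ∉ I} = Fintype.card ι - #I := by
    rw [Fintype.card_subtype_compl, Fintype.card_coe]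
  rwa [Fintype.card_piFinset, prod_const, Finset.card_univ, hcard, Nat.cast_pow] at h

open Finset Nat in
/-- Two triples sharing at most one element together save a factor `|X|^(3/2)`. -/
theorem card_depSet_inter_le {ι : Type*} [Fintype ι] [DecidableEq ι] {c : ℕ} {A : Type*} [Fintype A]
    [DecidableEq A] (X : Finset (Fin c → A)) (I J : Finset ι) (hI : #I = 3) (hJ : #J = 3)
    (hIJ : #(I ∩ J) ≤ 1) :
    (#(depSet X I ∩ depSet X J) : ℝ) ≤
      (#X : ℝ) ^ (Fintype.card ι - 5) * ((3 : ℝ) ^ c * √(#X : ℝ) ^ 4) *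
        ((3 : ℝ) ^ c * √(#X : ℝ) ^ 3) := by
  -- fixing the entries outside two elements `Q` of `I \ J` determines all entries indexed by `J`
  have h2 : 2 ≤ #(I \ J) := by
    have h := card_sdiff_add_card_inter I J
    omega
  obtain ⟨Q, hQ, hQ2⟩ := exists_subset_card_eq h2
  have hQI : Q ⊆ I := hQ.trans sdiff_subset
  have hJQ : ∀ i ∈ J, i ∉ Q := fun i hi hq => (mem_sdiff.1 (hQ hq)).2 hi
  have hcard : Fintype.card {i // i ∉ Q} = Fintype.card ι - 2 := by
    rw [Fintype.card_subtype_compl, Fintype.card_coe, hQ2]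
  have hJ' : #(J.subtype (· ∉ Q)) = 3 := by
    rw [card_subtype, filter_true_of_mem hJQ, hJ]
  have hR := card_depSet_le X (J.subtype (· ∉ Q))
  rw [hJ', hcard, Nat.sub_sub] at hR
  have h3 : (3‼ : ℝ) = 3 := by norm_num [Nat.doubleFactorial]
  refine (card_le_mul_of_fiber (depSet X I ∩ depSet X J) Q (depSet X (J.subtype (· ∉ Q))) ?_
    ((3 : ℝ) ^ c * √(#X : ℝ) ^ 3) (by positivity) ?_).trans ?_
  · intro x hx
    obtain ⟨hxX, y, hy, hys⟩ := mem_depSet.1 (mem_inter.1 hx).2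
    refine mem_depSet.2 ⟨fun i => hxX i, y, hy, ?_⟩
    rw [hys, sum_subtype_of_mem (fun i => keyVec (x i)) hJQ]
  · intro x₀ _
    have h := card_fiber_le X I Q hQI x₀
    rw [hI, hQ2, h3] at h
    refine le_trans (Nat.cast_le.2 (card_le_card ?_)) h
    exact filter_subset_filter _ inter_subset_left
  · rw [h3] at hR
    exact mul_le_mul_of_nonneg_right hR (by positivity)

theorem keyVec_injective {c : ℕ} {A : Type*} [DecidableEq A] :
    Function.Injective (keyVec : (Fin c → A) → Fin c × A → ZMod 2) := by
  intro x y h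
  funext p
  have := congrFun h (p, x p)
  by_contra hne
  simp [keyVec, Ne.symm hne] at this

open Finset in
/-- At any fixed position every key has exactly one character. -/
theorem odd_card_of_keyVec_eq {ι : Type*} {c : ℕ} (hc : 1 ≤ c) {A : Type*} [Fintype A]
    [DecidableEq A] {y : Fin c → A} {I : Finset ι} {x : ι → Fin c → A}
    (h : keyVec y = ∑ i ∈ I, keyVec (x i)) : Odd #I := by
  have h1 : ∀ z : Fin c → A, ∑ a, keyVec z (⟨0, hc⟩, a) = 1 := by
    intro z
    simp [keyVec]
  have h2 := h1 y
  simp only [h, Finset.sum_apply] at h2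
  rw [sum_comm, sum_congr rfl fun i _ => h1 (x i), sum_const, nsmul_one] at h2
  exact ZMod.natCast_eq_one_iff_odd.1 h2

/-! ### Summing over the dependencies -/

open Finset Nat in
/-- The contribution of all dependencies of length at least `5`. -/
theorem sum_card_depSet_le {s c : ℕ} (hc : 2 ≤ c) {A : Type*} [Fintype A] [DecidableEq A]
    (X : Finset (Fin c → A)) (hs : 1 ≤ s) (hm : s ^ c ≤ #X) :
    (∑ I : Finset (Fin s) with Odd #I ∧ 5 ≤ #I, (#(depSet X I) : ℝ)) ≤
      4 * (s : ℝ) ^ (3 * c + 1) * (#X : ℝ) ^ ((s : ℝ) - 3 / 2) := by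
  have hm1 : (1 : ℝ) ≤ #X := by
    exact_mod_cast (Nat.one_le_pow _ _ hs).trans hm
  have hm0 : (0 : ℝ) < #X := by linarith
  have hs1 : (1 : ℝ) ≤ s := by exact_mod_cast hs
  let g : ℕ → ℝ := fun r => if Odd r ∧ 5 ≤ r then
    (#X : ℝ) ^ (s - r) * ((r‼ : ℝ) ^ c * √(#X : ℝ) ^ (r + 1)) else 0
  have h1 : (∑ I : Finset (Fin s) with Odd #I ∧ 5 ≤ #I, (#(depSet X I) : ℝ)) ≤
      ∑ r ∈ range (s + 1), s.choose r • g r := by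
    have e := sum_powerset_apply_card (x := (univ : Finset (Fin s))) g
    rw [Finset.card_univ, Fintype.card_fin, powerset_univ] at e
    rw [← e, sum_filter]
    refine sum_le_sum fun I _ => ?_
    simp only [g]
    split_ifs
    · simpa using card_depSet_le X I
    · exact le_rfl
  have h2 : ∀ r ∈ range (s + 1), s.choose r • g r ≤
      2 * (s : ℝ) ^ (3 * c) * (#X : ℝ) ^ ((s : ℝ) - 3 / 2) := by
    intro r hr
    have hr' : r ≤ s := by simpa [Nat.lt_succ_iff] using hr
    simp only [g]
    split_ifs with h
    · obtain ⟨⟨v, rfl⟩, hv⟩ := h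
      obtain ⟨u, rfl⟩ := Nat.exists_eq_add_of_le (show 2 ≤ v by omega)
      have e0 : 2 * (2 + u) + 1 = 2 * u + 5 := by ring
      rw [e0] at hr' ⊢
      have hN := choose_mul_doubleFactorial_pow_le hc hr' hm
      have hN' : (s.choose (2 * u + 5) : ℝ) * ((2 * u + 5)‼ : ℝ) ^ c ≤
          2 * (s : ℝ) ^ (3 * c) * (#X : ℝ) ^ u := by exact_mod_cast hN
      have hsq : √(#X : ℝ) ^ (2 * u + 5 + 1) = (#X : ℝ) ^ (u + 3) := by
        rw [show 2 * u + 5 + 1 = 2 * (u + 3) by ring, pow_mul, Real.sq_sqrt hm0.le]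
      obtain ⟨d, hd⟩ := Nat.exists_eq_add_of_le hr'
      have hd' : s - (2 * u + 5) = d := by omega
      rw [hsq, hd', nsmul_eq_mul]
      calc _ = ((s.choose (2 * u + 5) : ℝ) * ((2 * u + 5)‼ : ℝ) ^ c) *
            ((#X : ℝ) ^ d * (#X : ℝ) ^ (u + 3)) := by ring
        _ ≤ (2 * (s : ℝ) ^ (3 * c) * (#X : ℝ) ^ u) *
            ((#X : ℝ) ^ d * (#X : ℝ) ^ (u + 3)) := by gcongr
        _ = 2 * (s : ℝ) ^ (3 * c) * (#X : ℝ) ^ (u + d + (u + 3)) := by ring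
        _ ≤ _ := by
          rw [← Real.rpow_natCast (#X : ℝ)]
          refine mul_le_mul_of_nonneg_left (Real.rpow_le_rpow_of_exponent_le hm1 ?_)
            (by positivity)
          rw [hd]
          push_cast
          linarith
    · rw [smul_zero]
      positivity
  refine h1.trans ((sum_le_card_nsmul _ _ _ h2).trans ?_)
  rw [card_range, nsmul_eq_mul]
  push_cast
  calc ((s : ℝ) + 1) * (2 * (s : ℝ) ^ (3 * c) * (#X : ℝ) ^ ((s : ℝ) - 3 / 2))
      ≤ (2 * s) * (2 * (s : ℝ) ^ (3 * c) * (#X : ℝ) ^ ((s : ℝ) - 3 / 2)) := by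
        gcongr; linarith
    _ = _ := by ring

open Finset in
/-- `card_depSet_inter_le` with the powers of `|X|` collected; two such triples force `5 ≤ s`, so the
truncated subtraction `s - 5` there is exact. -/
theorem card_depSet_inter_le_rpow {s c : ℕ} {A : Type*} [Fintype A] [DecidableEq A]
    (X : Finset (Fin c → A)) (hm : 1 ≤ #X) (I J : Finset (Fin s)) (hI : #I = 3) (hJ : #J = 3)
    (hIJ : #(I ∩ J) ≤ 1) :
    (#(depSet X I ∩ depSet X J) : ℝ) ≤ 9 ^ c * (#X : ℝ) ^ ((s : ℝ) - 3 / 2) := by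
  have hm0 : (0 : ℝ) < #X := by exact_mod_cast hm
  have h5 : 5 ≤ s := by
    have h1 := card_union_add_card_inter I J
    have h2 := card_le_univ (I ∪ J)
    rw [Fintype.card_fin] at h2
    omega
  have h := card_depSet_inter_le X I J hI hJ hIJ
  rw [Fintype.card_fin] at h
  refine h.trans (le_of_eq ?_)
  calc _ = ((3 : ℝ) * 3) ^ c * (√(#X : ℝ) ^ 7 * (#X : ℝ) ^ (s - 5)) := by
        rw [mul_pow]; ring
    _ = _ := by
      rw [Real.sqrt_eq_rpow, ← Real.rpow_natCast _ 7, ← Real.rpow_natCast _ (s - 5),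
        ← Real.rpow_mul hm0.le, ← Real.rpow_add hm0, Nat.cast_sub h5]
      norm_num
      congr 1
      ring

theorem stmt11 (c : ℕ) (hc : 1 ≤ c) :
    ∃ K C₀ : ℝ, ∀ (A : Type) [Fintype A] [DecidableEq A],
      ∀ (X : Finset (Fin c → A)) (s : ℕ), 1 ≤ s → ((s : ℝ) ^ c ≤ (4 / 5) * X.card) →
      ∀ k : ℕ, max (s - 1) 5 ≤ k →
      (Nat.card {x : Fin s → Fin c → A // (∀ i, x i ∈ X) ∧
          ∃ Y : Finset (Fin c → A), Y ⊆ X ∧ Y.card = k ∧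
            ∀ y ∈ Y, (∀ i, y ≠ x i) ∧
              ∃ I : Finset (Fin s), keyVec y = ∑ i ∈ I, keyVec (x i)} : ℝ) ≤
        C₀ * (s : ℝ) ^ K * (X.card : ℝ) ^ ((s : ℝ) - 3 / 2) := by
  classical
  refine ⟨((3 * c + 6 : ℕ) : ℝ), 4 + 9 ^ c, ?_⟩
  intro A _ _ X s hs hsX k hk
  have hk5 : 5 ≤ k := le_trans (le_max_right _ _) hk
  rw [Real.rpow_natCast]
  obtain rfl | hc2 : c = 1 ∨ 2 ≤ c := by omega
  · -- for `c = 1` distinct keys have disjoint supports, so no tuple qualifies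
    have hempty : IsEmpty {x : Fin s → Fin 1 → A // (∀ i, x i ∈ X) ∧
          ∃ Y : Finset (Fin 1 → A), Y ⊆ X ∧ Y.card = k ∧
            ∀ y ∈ Y, (∀ i, y ≠ x i) ∧
              ∃ I : Finset (Fin s), keyVec y = ∑ i ∈ I, keyVec (x i)} := by
      refine ⟨fun ⟨x, _, Y, _, hYk, hY⟩ => ?_⟩
      obtain ⟨y, hy⟩ := Finset.card_pos.1 (show 0 < Y.card by omega)
      obtain ⟨hne, I, hI⟩ := hY y hy
      have h := congrFun hI (0, y 0)
      have hne' : ∀ i, x i 0 ≠ y 0 := fun i h0 =>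
        hne i (funext fun p => by rw [Subsingleton.elim p 0, h0])
      rw [Finset.sum_apply] at h
      simp [keyVec, hne'] at h
    rw [Nat.card_of_isEmpty, Nat.cast_zero]
    positivity
  · have hmX : s ^ c ≤ X.card := by
      have : (s : ℝ) ^ c ≤ X.card := hsX.trans (by
        have : (0 : ℝ) ≤ X.card := Nat.cast_nonneg _
        linarith)
      exact_mod_cast this
    have hm1 : 1 ≤ X.card := (Nat.one_le_pow _ _ hs).trans hmX
    have hs1 : (1 : ℝ) ≤ s := by exact_mod_cast hs
    rw [Nat.card_eq_fintype_card, Fintype.card_subtype]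
    let Big : Finset (Finset (Fin s)) := {I | Odd I.card ∧ 5 ≤ I.card}
    let Pairs : Finset (Finset (Fin s) × Finset (Fin s)) :=
      {p ∈ Finset.powersetCard 3 Finset.univ ×ˢ Finset.powersetCard 3 Finset.univ |
        (p.1 ∩ p.2).card ≤ 1}
    have hsub : (Finset.univ.filter fun x : Fin s → Fin c → A => (∀ i, x i ∈ X) ∧
          ∃ Y : Finset (Fin c → A), Y ⊆ X ∧ Y.card = k ∧
            ∀ y ∈ Y, (∀ i, y ≠ x i) ∧
              ∃ I : Finset (Fin s), keyVec y = ∑ i ∈ I, keyVec (x i)) ⊆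
        Big.biUnion (fun I => depSet X I) ∪
          Pairs.biUnion (fun p => depSet X p.1 ∩ depSet X p.2) := by
      intro x hx
      obtain ⟨-, hxX, Y, hYX, hYk, hY⟩ := Finset.mem_filter.1 hx
      choose! I hI using fun y hy => (hY y hy).2
      have hodd : ∀ y ∈ Y, Odd (I y).card := fun y hy => odd_card_of_keyVec_eq hc (hI y hy)
      have hone : ∀ y ∈ Y, (I y).card ≠ 1 := by
        intro y hy h1
        obtain ⟨i, hi⟩ := Finset.card_eq_one.1 h1
        have h := hI y hy
        rw [hi, Finset.sum_singleton] at h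
        exact (hY y hy).1 i (keyVec_injective h)
      have hdep : ∀ y ∈ Y, x ∈ depSet X (I y) := fun y hy =>
        mem_depSet.2 ⟨hxX, y, hYX hy, hI y hy⟩
      rw [Finset.mem_union]
      by_cases hbig : ∃ y ∈ Y, 5 ≤ (I y).card
      · obtain ⟨y, hy, h5⟩ := hbig
        exact Or.inl (Finset.mem_biUnion.2 ⟨I y, by simp [Big, h5, hodd y hy], hdep y hy⟩)
      · right
        push Not at hbig
        have h3 : ∀ y ∈ Y, (I y).card = 3 := by
          intro y hy
          have h1 := hbig y hy
          have h2 := hone y hy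
          obtain ⟨v, hv⟩ := hodd y hy
          omega
        have hinj : Set.InjOn I Y := by
          intro y hy y' hy' h
          apply keyVec_injective
          rw [hI y hy, hI y' hy', h]
        obtain ⟨I₁, hI₁, I₂, hI₂, h12⟩ := exists_small_inter (Y.image I)
          (fun J hJ => by
            obtain ⟨y, hy, rfl⟩ := Finset.mem_image.1 hJ
            exact h3 y hy)
          (by rw [Finset.card_image_of_injOn hinj, hYk]; exact hk)
        obtain ⟨y₁, hy₁, rfl⟩ := Finset.mem_image.1 hI₁
        obtain ⟨y₂, hy₂, rfl⟩ := Finset.mem_image.1 hI₂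
        refine Finset.mem_biUnion.2 ⟨(I y₁, I y₂), ?_,
          Finset.mem_inter.2 ⟨hdep y₁ hy₁, hdep y₂ hy₂⟩⟩
        simp [Pairs, Finset.mem_powersetCard, h3 y₁ hy₁, h3 y₂ hy₂, h12]
    have hBig : ((Big.biUnion (fun I => depSet X I)).card : ℝ) ≤
        4 * (s : ℝ) ^ (3 * c + 1) * (X.card : ℝ) ^ ((s : ℝ) - 3 / 2) := by
      refine le_trans ?_ (sum_card_depSet_le hc2 X hs hmX)
      exact_mod_cast Finset.card_biUnion_le
    have hPairsCard : (Pairs.card : ℝ) ≤ (s : ℝ) ^ 6 := by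
      have h1 : Pairs.card ≤ s ^ 3 * s ^ 3 := by
        refine (Finset.card_filter_le _ _).trans ?_
        rw [Finset.card_product, Finset.card_powersetCard, Finset.card_univ, Fintype.card_fin]
        exact Nat.mul_le_mul (Nat.choose_le_pow _ _) (Nat.choose_le_pow _ _)
      calc (Pairs.card : ℝ) ≤ ((s ^ 3 * s ^ 3 : ℕ) : ℝ) := by exact_mod_cast h1
        _ = _ := by push_cast; ring
    have hPairs : ((Pairs.biUnion (fun p => depSet X p.1 ∩ depSet X p.2)).card : ℝ) ≤
        (s : ℝ) ^ 6 * (9 ^ c * (X.card : ℝ) ^ ((s : ℝ) - 3 / 2)) := by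
      have h1 : ((Pairs.biUnion (fun p => depSet X p.1 ∩ depSet X p.2)).card : ℝ) ≤
          ∑ p ∈ Pairs, ((depSet X p.1 ∩ depSet X p.2).card : ℝ) := by
        exact_mod_cast Finset.card_biUnion_le
      refine h1.trans ((Finset.sum_le_card_nsmul _ _
        (9 ^ c * (X.card : ℝ) ^ ((s : ℝ) - 3 / 2)) ?_).trans ?_)
      · intro p hp
        obtain ⟨hp1, hp2⟩ := Finset.mem_filter.1 hp
        obtain ⟨hpa, hpb⟩ := Finset.mem_product.1 hp1
        refine (show _ = _ by congr!).trans_le (card_depSet_inter_le_rpow X hm1 p.1 p.2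
          (Finset.mem_powersetCard.1 hpa).2 (Finset.mem_powersetCard.1 hpb).2
          ((show _ = _ by congr!).trans_le hp2))
      · rw [nsmul_eq_mul]
        gcongr
    have hpow1 : (s : ℝ) ^ (3 * c + 1) ≤ (s : ℝ) ^ (3 * c + 6) :=
      pow_le_pow_right₀ hs1 (by omega)
    have hpow2 : (s : ℝ) ^ 6 ≤ (s : ℝ) ^ (3 * c + 6) := pow_le_pow_right₀ hs1 (by omega)
    have hcard := (Finset.card_le_card hsub).trans (Finset.card_union_le _ _)
    calc _ ≤ ((Big.biUnion (fun I => depSet X I)).card : ℝ) +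
          ((Pairs.biUnion (fun p => depSet X p.1 ∩ depSet X p.2)).card : ℝ) := by
          exact_mod_cast hcard
      _ ≤ 4 * (s : ℝ) ^ (3 * c + 6) * (X.card : ℝ) ^ ((s : ℝ) - 3 / 2) +
          (s : ℝ) ^ (3 * c + 6) * (9 ^ c * (X.card : ℝ) ^ ((s : ℝ) - 3 / 2)) := by
          refine add_le_add (hBig.trans ?_) (hPairs.trans ?_) <;> gcongr
      _ = _ := by ring
end

section
/- Let d ≥ 2 and let X be a finite set of keys inserted into the bins [g]×{1,…,d} by the d-choice paradigm using arbitrary functions h_1,…,h_d : X → [g], with any insertion order and any tie-breaking rule. There exists a constant β, depending only on d, such that if after all insertions some bin has load at least k+1 (for some k ≥ 1), then the hash graph either contains a copy of the d-nomial tree B_{d,k}, or contains a subgraph (V,E) with |E| ≤ β·k and |V| ≤ (d−1)|E| − 1. -/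
/-!
Call the number of keys already lying in a bin when a key is placed there the *height* of that key.
If `m` is less than the final load of a bin `b`, then exactly one key of height `m` was placed in
`b`, and each of the `d` bins of that key has load at least `m`. Iterating this observation unfolds
a bin of load at least `m` into a (not necessarily injective) image of `B_{d,m}` in the hash graph.
If the unfolding map is injective on vertices, it is a copy of `B_{d,m}`.

Start from a bin `r` of load at least `k + 1`, let `x` be its key of height `k`, and unfold two of
the bins of `x` to depth `k`. Suppose that neither unfolding is injective. Each vertex of an
unfolding carries a *label*: `none` for the root `r`, or `some (e, j)` if it was last introduced as
the `j`-th bin of a key `e` not placed in that `j`-th bin. A set `S` of keys that is closed under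
going back to `r` (`Sys.Good`) spans only bins named by labels of `S`, of which there are
`(d - 1)|S| + 1`, so `S` has the desired property as soon as labels collide at least twice.

Non-injectivity of an unfolding yields a pair of distinct labels of the same bin
(`Sys.exists_collision`). If the two unfoldings yield the same pair, then some key is reached
through both of them, and following its two histories upwards yields another collision, between
labels of strictly larger height (`Sys.collision_above`). In both cases there are two different
collisions; they involve four labels, each reached through at most `k + 1` keys, so `|S| ≤ 8k`.
-/

/-- The load of the bin `bin` after the keys of the list `P` have been placed, where key `y`
was placed in bin `(h (σ y) y, σ y)`. -/
def loadAt {α β : Type*} [DecidableEq β] {d : ℕ} (h : Fin d → α → β)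
    (σ : α → Fin d) (P : List α) (bin : β × Fin d) : ℕ :=
  (P.filter fun y => decide ((h (σ y) y, σ y) = bin)).length

/-- `σ` records, for each key, which of its `d` choices it used.  It is a valid run of the
`d`-choice paradigm with insertion order `L` if each key went into one of its `d` bins of
minimal load at the time of its insertion. -/
def validPlacement {α β : Type*} [DecidableEq β] {d : ℕ} (h : Fin d → α → β)
    (L : List α) (σ : α → Fin d) : Prop :=
  ∀ (t : Fin L.length) (j : Fin d),
    loadAt h σ (L.take t) (h (σ (L.get t)) (L.get t), σ (L.get t)) ≤
      loadAt h σ (L.take t) (h j (L.get t), j)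

/-- The edge set of the `d`-nomial tree `B_{d,k}`.  Vertices are encoded as strings in
`Fin k → Fin d`; the root is the constant-`0` string, and the copy of `B_{d,k-1}` rooted at
the `i`-th vertex of the top edge consists of the strings starting with `i`. -/
def BEdges (d : ℕ) [NeZero d] : (k : ℕ) → Finset (Finset (Fin k → Fin d))
  | 0 => ∅
  | (k + 1) =>
      insert (Finset.univ.image fun i : Fin d => Fin.cons i fun _ => (0 : Fin d))
        (Finset.univ.biUnion fun i : Fin d =>
          (BEdges d k).image fun e => e.image (Fin.cons i))

/-- The hash graph (given by the edge map `hashEdge` on the key set `X`) contains a copy of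
the hypertree with edge set `Edges`: there are distinct keys of `X`, one per edge, and an
injection of the vertex set into the bins mapping each tree edge onto the hash edge of the
corresponding key. -/
def containsCopy {Vt A G : Type*} [DecidableEq Vt] [DecidableEq G]
    (Edges : Finset (Finset Vt)) (X : Finset A) (hashEdge : A → Finset G) : Prop :=
  ∃ (φ : Vt → G) (ψ : Finset Vt → A),
    Set.InjOn φ ↑(Edges.biUnion id) ∧ Set.InjOn ψ ↑Edges ∧
      ∀ e ∈ Edges, ψ e ∈ X ∧ e.image φ = hashEdge (ψ e)

/-- The combinatorial data of a run of the `d`-choice paradigm used in the argument: `bin x j` is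
the `j`-th bin of the key `x`, `top x` the index of the bin receiving `x`, `load` the final load,
`key b m` the key placed in `b` when `b` held `m` keys (meaningful for `m < load b`), and `ht x` the
height of `x`, the load of its bin just before its insertion. -/
structure Sys (A B : Type*) (d : ℕ) (X : Finset A) where
  bin : A → Fin d → B
  top : A → Fin d
  load : B → ℕ
  key : B → ℕ → A
  ht : A → ℕ
  bin_key_top : ∀ b m, m < load b → bin (key b m) (top (key b m)) = b
  le_load : ∀ b m j, m < load b → m ≤ load (bin (key b m) j)
  ht_key : ∀ b m, m < load b → ht (key b m) = m
  key_mem : ∀ b m, m < load b → key b m ∈ X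

namespace Sys

variable {A B : Type*} {d : ℕ} {X : Finset A} (Y : Sys A B d X)

/-! ### Unfolding a bin into a `d`-nomial tree -/

/-- The map from the vertices of `B_{d,m}` to the bins obtained by unfolding the bin `b` to depth
`m`. The transposition puts the bin that received the key at the root of the tree edge, which is
its vertex with index `0`. -/
def unfold [NeZero d] : (m : ℕ) → B → (Fin m → Fin d) → B
  | 0, b, _ => b
  | m + 1, b, s =>
      unfold m (Y.bin (Y.key b m) (Equiv.swap 0 (Y.top (Y.key b m)) (s 0))) (Fin.tail s)

theorem unfold_zero [NeZero d] (m : ℕ) (b : B) (hb : m ≤ Y.load b) :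
    Y.unfold m b (fun _ => 0) = b := by
  induction m with
  | zero => rfl
  | succ m ih =>
    have h1 := Y.bin_key_top b m (by omega)
    simp only [unfold, Equiv.swap_apply_left, h1]
    exact ih (by omega)

theorem image_unfold [DecidableEq B] [NeZero d] (m : ℕ) :
    ∀ b : B, m ≤ Y.load b → ∀ e ∈ BEdges d m,
      ∃ x ∈ X, e.image (Y.unfold m b) = Finset.univ.image (Y.bin x) := by
  induction m with
  | zero => intro b _ e he; simp [BEdges] at he
  | succ m ih =>
    intro b hb e he
    simp only [BEdges, Finset.mem_insert, Finset.mem_biUnion, Finset.mem_univ, true_and,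
      Finset.mem_image] at he
    rcases he with rfl | ⟨i, e, he, rfl⟩
    · refine ⟨Y.key b m, Y.key_mem b m (by omega), ?_⟩
      rw [Finset.image_image]
      have hcomp : ∀ i : Fin d, Y.unfold (m + 1) b (Fin.cons i fun _ => (0 : Fin d)) =
          Y.bin (Y.key b m) (Equiv.swap 0 (Y.top (Y.key b m)) i) := by
        intro i
        simp only [unfold, Fin.cons_zero, Fin.tail_cons]
        exact Y.unfold_zero m _ (Y.le_load b m _ (by omega))
      ext c
      simp only [Finset.mem_image, Finset.mem_univ, true_and, Function.comp, hcomp]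
      constructor
      · rintro ⟨i, rfl⟩; exact ⟨_, rfl⟩
      · rintro ⟨j, rfl⟩
        exact ⟨Equiv.swap 0 (Y.top (Y.key b m)) j, by rw [Equiv.swap_apply_self]⟩
    · obtain ⟨x, hx, hxe⟩ := ih (Y.bin (Y.key b m) (Equiv.swap 0 (Y.top (Y.key b m)) i))
        (Y.le_load b m _ (by omega)) e he
      refine ⟨x, hx, ?_⟩
      rw [← hxe, Finset.image_image]
      apply Finset.image_congr
      intro s _
      simp [unfold]

theorem containsCopy_of_injective [DecidableEq B] [NeZero d] (m : ℕ) (b : B) (hb : m ≤ Y.load b)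
    (hinj : Function.Injective (Y.unfold m b)) :
    containsCopy (BEdges d m) X (fun x => Finset.univ.image (Y.bin x)) := by
  have : Nonempty A := ⟨Y.key b 0⟩
  choose! ψ hψ using Y.image_unfold m b hb
  refine ⟨Y.unfold m b, ψ, hinj.injOn, ?_, hψ⟩
  -- The image of an edge determines the edge, so distinct edges receive distinct keys.
  intro e he e' he' h
  apply Finset.image_injective hinj
  rw [(hψ e he).2, (hψ e' he').2, h]

/-! ### Labels and collisions -/

/-- The bin named by a label, relative to the root `r`. -/
def binOf (r : B) : Option (A × Fin d) → B
  | none => r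
  | some (e, j) => Y.bin e j

open Classical in
/-- The label of the `j`-th bin of `key b m`, where `b` carries the label `p`: the bin receiving the
key is `b` itself and keeps its label. -/
noncomputable def lab (b : B) (m : ℕ) (j : Fin d) (p : Option (A × Fin d)) : Option (A × Fin d) :=
  if j = Y.top (Y.key b m) then p else some (Y.key b m, j)

/-- `Reach m₀ b₀ p₀ m b p`: unfolding the bin `b₀` labelled `p₀` from depth `m₀` produces a bin `b`
labelled `p` which remains to be unfolded to depth `m`. -/
inductive Reach (m₀ : ℕ) (b₀ : B) (p₀ : Option (A × Fin d)) :
    ℕ → B → Option (A × Fin d) → Prop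
  | start : Reach m₀ b₀ p₀ m₀ b₀ p₀
  | step {m b p} (j : Fin d) : Reach m₀ b₀ p₀ (m + 1) b p →
      Reach m₀ b₀ p₀ m (Y.bin (Y.key b m) j) (Y.lab b m j p)

open Classical in
/-- The labels arising from a set `S` of keys. -/
noncomputable def labels (S : Finset A) : Finset (Option (A × Fin d)) :=
  insert none ((S.sigma fun e => Finset.univ.erase (Y.top e)).image fun x => some (x.1, x.2))

theorem some_mem_labels {S : Finset A} {e : A} {j : Fin d} :
    some (e, j) ∈ Y.labels S ↔ e ∈ S ∧ j ≠ Y.top e := by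
  simp only [labels, Finset.mem_insert, reduceCtorEq, false_or, Finset.mem_image, Finset.mem_sigma,
    Finset.mem_erase, Finset.mem_univ, and_true, Option.some.injEq, Prod.mk.injEq]
  constructor
  · rintro ⟨⟨a, b⟩, h, rfl, rfl⟩; exact h
  · intro h; exact ⟨⟨e, j⟩, h, rfl, rfl⟩

theorem none_mem_labels {S : Finset A} : none ∈ Y.labels S := by
  simp [labels]

theorem labels_mono {S T : Finset A} (h : S ⊆ T) : Y.labels S ⊆ Y.labels T := by
  rintro (_ | ⟨e, j⟩) hp
  · exact Y.none_mem_labels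
  · rw [some_mem_labels] at hp ⊢
    exact ⟨h hp.1, hp.2⟩

theorem card_labels_le (S : Finset A) : (Y.labels S).card ≤ (d - 1) * S.card + 1 := by
  classical
  refine (Finset.card_insert_le _ _).trans (Nat.add_le_add_right ?_ 1)
  refine Finset.card_image_le.trans ?_
  simp [Finset.card_sigma, mul_comm]

/-- Every bin of a key of `S` is named by a label of `S`. This is what remains of the connectedness
of `S` to the root `r`. -/
def Good (r : B) (S : Finset A) : Prop :=
  ∀ e ∈ S, ∀ j, ∃ p ∈ Y.labels S, Y.binOf r p = Y.bin e j

theorem Good.union [DecidableEq A] {r : B} {S T : Finset A} (hS : Y.Good r S) (hT : Y.Good r T) :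
    Y.Good r (S ∪ T) := by
  intro e he j
  rcases Finset.mem_union.1 he with he | he
  · obtain ⟨p, hp, h⟩ := hS e he j
    exact ⟨p, Y.labels_mono Finset.subset_union_left hp, h⟩
  · obtain ⟨p, hp, h⟩ := hT e he j
    exact ⟨p, Y.labels_mono Finset.subset_union_right hp, h⟩

/-- The invariant satisfied by every bin `b` reached at depth `m` with label `p` when the root `r`
is unfolded to depth `n`: in particular, the keys leading to it form a good set of size at most
`n - m`. -/
structure Inv (n : ℕ) (r : B) (m : ℕ) (b : B) (p : Option (A × Fin d)) : Prop where
  le : m ≤ Y.load b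
  bin : Y.binOf r p = b
  ht : ∀ e j, p = some (e, j) → m ≤ Y.ht e
  good : ∃ S ⊆ X, Y.Good r S ∧ S.card + m ≤ n ∧ p ∈ Y.labels S

variable {Y}

theorem Inv.step {n : ℕ} {r : B} {m : ℕ} {b : B} {p : Option (A × Fin d)}
    (h : Y.Inv n r (m + 1) b p) (j : Fin d) :
    Y.Inv n r m (Y.bin (Y.key b m) j) (Y.lab b m j p) := by
  classical
  have hm : m < Y.load b := h.le
  have h1 := Y.bin_key_top b m hm
  obtain ⟨S, hSX, hS, hc, hp⟩ := h.good
  by_cases hj : j = Y.top (Y.key b m)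
  · have hl : Y.lab b m j p = p := by simp [lab, hj]
    rw [hl]
    subst hj
    rw [h1]
    exact ⟨hm.le, h.bin, fun e j he => by have := h.ht e j he; omega,
      S, hSX, hS, by omega, hp⟩
  · have hl : Y.lab b m j p = some (Y.key b m, j) := by simp [lab, hj]
    rw [hl]
    refine ⟨Y.le_load b m j hm, rfl, ?_, insert (Y.key b m) S, ?_, ?_, ?_, ?_⟩
    · rintro e i he
      simp only [Option.some.injEq, Prod.mk.injEq] at he
      rw [← he.1, Y.ht_key b m hm]
    · exact Finset.insert_subset (Y.key_mem b m hm) hSX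
    · have hsub : S ⊆ insert (Y.key b m) S := Finset.subset_insert _ _
      intro e he i
      rcases Finset.mem_insert.1 he with rfl | he
      · by_cases hi : i = Y.top (Y.key b m)
        · exact ⟨p, Y.labels_mono hsub hp, by rw [hi, h1, h.bin]⟩
        · exact ⟨some (Y.key b m, i), Y.some_mem_labels.2 ⟨he, hi⟩, rfl⟩
      · obtain ⟨q, hq, h⟩ := hS e he i
        exact ⟨q, Y.labels_mono hsub hq, h⟩
    · have := Finset.card_insert_le (Y.key b m) S
      omega
    · exact Y.some_mem_labels.2 ⟨Finset.mem_insert_self _ _, hj⟩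

theorem Reach.inv {n : ℕ} {r : B} {m₀ : ℕ} {b₀ : B} {p₀ : Option (A × Fin d)}
    (h₀ : Y.Inv n r m₀ b₀ p₀) {m : ℕ} {b : B} {p : Option (A × Fin d)}
    (h : Y.Reach m₀ b₀ p₀ m b p) : Y.Inv n r m b p := by
  induction h with
  | start => exact h₀
  | step j _ ih => exact ih.step j

theorem Reach.le {m₀ : ℕ} {b₀ : B} {p₀ : Option (A × Fin d)} {m : ℕ} {b : B}
    {p : Option (A × Fin d)} (h : Y.Reach m₀ b₀ p₀ m b p) : m ≤ m₀ := by
  induction h with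
  | start => exact le_rfl
  | step j _ ih => omega

/-- Two different bin-and-label positions at the same depth, or two different vertex strings, that
unfold to the same bin force two distinct labels of one bin. Both positions are stepped downwards
until they merge or depth `0` is reached; immediately before merging, or at depth `0` if they never
merge, they share the bin but not the label. -/
theorem exists_collision [NeZero d] {n : ℕ} {r : B} {m₀ : ℕ} {b₀ : B} {p₀ : Option (A × Fin d)}
    (h₀ : Y.Inv n r m₀ b₀ p₀) (m : ℕ) :
    ∀ (b b' : B) (p p' : Option (A × Fin d)) (s s' : Fin m → Fin d),
      Y.Reach m₀ b₀ p₀ m b p → Y.Reach m₀ b₀ p₀ m b' p' →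
      (b = b' → p = p' → s ≠ s') → Y.unfold m b s = Y.unfold m b' s' →
      ∃ m₁ b₁ q q', q ≠ q' ∧ Y.Reach m₀ b₀ p₀ m₁ b₁ q ∧ Y.Reach m₀ b₀ p₀ m₁ b₁ q' := by
  induction m with
  | zero =>
    intro b b' p p' s s' h h' hne heq
    have hb : b = b' := heq
    subst hb
    exact ⟨0, b, p, p', fun hp => hne rfl hp (Subsingleton.elim _ _), h, h'⟩
  | succ m ih =>
    intro b b' p p' s s' h h' hne heq
    by_cases hn : Y.bin (Y.key b m) (Equiv.swap 0 (Y.top (Y.key b m)) (s 0)) =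
          Y.bin (Y.key b' m) (Equiv.swap 0 (Y.top (Y.key b' m)) (s' 0)) ∧
        Y.lab b m (Equiv.swap 0 (Y.top (Y.key b m)) (s 0)) p =
          Y.lab b' m (Equiv.swap 0 (Y.top (Y.key b' m)) (s' 0)) p' ∧ Fin.tail s = Fin.tail s'
    · obtain ⟨hbin, hlab, htail⟩ := hn
      have hi := h.inv h₀
      have hi' := h'.inv h₀
      have h1 := Y.bin_key_top b m hi.le
      have h1' := Y.bin_key_top b' m hi'.le
      have h3 := Y.ht_key b m hi.le
      have h3' := Y.ht_key b' m hi'.le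
      have hs : b = b' → s 0 = s' 0 → p = p' → False := by
        intro hb h0 hp
        refine hne hb hp ?_
        rw [← Fin.cons_self_tail s, ← Fin.cons_self_tail s', h0, htail]
      -- A key that has just been unfolded has height `m`, an earlier one has a larger height.
      by_cases hj : Equiv.swap 0 (Y.top (Y.key b m)) (s 0) = Y.top (Y.key b m) <;>
        by_cases hj' : Equiv.swap 0 (Y.top (Y.key b' m)) (s' 0) = Y.top (Y.key b' m)
      · exfalso
        simp only [lab, hj, hj', if_true] at hlab hbin
        rw [h1, h1'] at hbin
        subst hbin
        exact hs rfl ((Equiv.swap 0 (Y.top (Y.key b m))).injective (hj.trans hj'.symm)) hlab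
      · exfalso
        simp only [lab, hj, hj', if_true, if_false] at hlab
        have := hi.ht _ _ hlab
        omega
      · exfalso
        simp only [lab, hj, hj', if_true, if_false] at hlab
        have := hi'.ht _ _ hlab.symm
        omega
      · simp only [lab, hj, hj', if_false, Option.some.injEq, Prod.mk.injEq] at hlab
        obtain ⟨hk, hl⟩ := hlab
        have hb : b = b' := by rw [← h1, ← h1', hk]
        subst hb
        exact ⟨m + 1, b, p, p', fun hp => hs rfl ((Equiv.injective _) hl) hp, h, h'⟩
    · exact ih _ _ _ _ (Fin.tail s) (Fin.tail s') (h.step _) (h'.step _)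
        (fun h1 h2 h3 => hn ⟨h1, h2, h3⟩) heq

/-- A label reached is either the starting one or introduced by a key unfolded on the way. -/
theorem Reach.eq_or {m₀ : ℕ} {b₀ : B} {p₀ : Option (A × Fin d)} {m : ℕ} {b : B}
    {p : Option (A × Fin d)} (h : Y.Reach m₀ b₀ p₀ m b p) :
    p = p₀ ∨ ∃ m' b' p' j, Y.Reach m₀ b₀ p₀ (m' + 1) b' p' ∧ p = some (Y.key b' m', j) := by
  induction h with
  | start => exact Or.inl rfl
  | @step m b p j h ih =>
    by_cases hj : j = Y.top (Y.key b m)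
    · simpa only [lab, hj, if_true] using ih
    · exact Or.inr ⟨m, b, p, j, h, by simp [lab, hj]⟩

/-- Let `x` be a key of height `k`. A label reached in the unfoldings of both the root `r` and the
`i`-th bin of `x`, to depth `k`, lies strictly below a bin that receives distinct labels in the two
unfoldings. -/
theorem collision_above {k : ℕ} {r : B} {x : A} {i : Fin d} (hx : Y.ht x = k)
    (h₀ : Y.Inv (k + 1) r k r none) (h₁ : Y.Inv (k + 1) r k (Y.bin x i) (some (x, i)))
    {m : ℕ} {b : B} {p : Option (A × Fin d)} (h : Y.Reach k r none m b p) :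
    ∀ (m' : ℕ) (b' : B), Y.Reach k (Y.bin x i) (some (x, i)) m' b' p →
      ∃ e j, p = some (e, j) ∧ ∃ m₁ b₁ q q', q ≠ q' ∧ Y.Reach k r none m₁ b₁ q ∧
        Y.Reach k (Y.bin x i) (some (x, i)) m₁ b₁ q' ∧ Y.ht e < m₁ := by
  induction h with
  | start =>
    intro m' b' h'
    rcases h'.eq_or with h | ⟨_, _, _, _, _, h⟩ <;> cases h
  | @step m b p j h ih =>
    intro m' b' h'
    have hi := h.inv h₀
    by_cases hj : j = Y.top (Y.key b m)
    · simp only [lab, hj, if_true] at h' ⊢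
      exact ih m' b' h'
    · simp only [lab, hj, if_false] at h' ⊢
      have hht := Y.ht_key b m hi.le
      refine ⟨_, _, rfl, ?_⟩
      rcases h'.eq_or with he | ⟨m₂, b₂, p₂, j₂, h₂, he⟩
      · simp only [Option.some.injEq, Prod.mk.injEq] at he
        have := h.le
        rw [he.1] at hht
        omega
      · simp only [Option.some.injEq, Prod.mk.injEq] at he
        have hi₂ := h₂.inv h₁
        -- A key determines its height and the bin that received it.
        have hm : m₂ = m := by rw [← Y.ht_key b₂ m₂ hi₂.le, ← he.1, hht]
        subst hm
        have hb : b = b₂ := by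
          rw [← Y.bin_key_top b m₂ hi.le, ← Y.bin_key_top b₂ m₂ hi₂.le, he.1]
        subst hb
        by_cases hp : p = p₂
        · subst hp
          obtain ⟨e, j', rfl, m₁, b₁, q, q', hq, hr, hr', hlt⟩ := ih _ _ h₂
          have := hi.ht e j' rfl
          exact ⟨m₁, b₁, q, q', hq, hr, hr', by omega⟩
        · exact ⟨m₂ + 1, b, p, p₂, hp, h, h₂, by omega⟩

end Sys

/-! ### Two collisions give the dense subgraph -/

theorem card_image_add_two_le {P Q : Type*} [DecidableEq Q] {D : Finset P} {f : P → Q}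
    {p q p' q' : P} (hp : p ∈ D) (hq : q ∈ D) (hp' : p' ∈ D) (hq' : q' ∈ D) (hpq : p ≠ q)
    (hpq' : p' ≠ q') (h : f p = f q) (h' : f p' = f q') (h1 : p ≠ p') (h2 : p ≠ q') :
    (D.image f).card + 2 ≤ D.card := by
  classical
  have hp2 : p' ∈ D.erase p := Finset.mem_erase.2 ⟨h1.symm, hp'⟩
  have hsub : D.image f ⊆ ((D.erase p).erase p').image f := by
    -- Among the labels with a given image, `q'` survives whenever `p'` is deleted.
    have key : ∀ a ∈ D.erase p, f a ∈ ((D.erase p).erase p').image f := by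
      intro a ha
      by_cases hap : a = p'
      · subst hap
        rw [h']
        exact Finset.mem_image_of_mem _
          (Finset.mem_erase.2 ⟨hpq'.symm, Finset.mem_erase.2 ⟨h2.symm, hq'⟩⟩)
      · exact Finset.mem_image_of_mem _ (Finset.mem_erase.2 ⟨hap, ha⟩)
    intro c hc
    obtain ⟨a, ha, rfl⟩ := Finset.mem_image.1 hc
    by_cases hap : a = p
    · subst hap
      rw [h]
      exact key q (Finset.mem_erase.2 ⟨hpq.symm, hq⟩)
    · exact key a (Finset.mem_erase.2 ⟨hap, ha⟩)
  have hle := (Finset.card_le_card hsub).trans Finset.card_image_le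
  have e1 := Finset.card_erase_add_one hp
  have e2 := Finset.card_erase_add_one hp2
  omega

namespace Sys

variable {A B : Type*} {d : ℕ} {X : Finset A} {Y : Sys A B d X}

theorem dense_of_collisions [DecidableEq B] {k : ℕ} (hk : 1 ≤ k) {r : B}
    {m b p q m' b' p' q'} (hp : Y.Inv (k + 1) r m b p) (hq : Y.Inv (k + 1) r m b q)
    (hp' : Y.Inv (k + 1) r m' b' p') (hq' : Y.Inv (k + 1) r m' b' q')
    (hpq : p ≠ q) (hpq' : p' ≠ q') (h1 : p ≠ p') (h2 : p ≠ q') :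
    ∃ S ⊆ X, S.card ≤ 8 * k ∧
      (S.biUnion fun x => Finset.univ.image (Y.bin x)).card + 1 ≤ (d - 1) * S.card := by
  classical
  obtain ⟨S₁, hX₁, hg₁, hc₁, hm₁⟩ := hp.good
  obtain ⟨S₂, hX₂, hg₂, hc₂, hm₂⟩ := hq.good
  obtain ⟨S₃, hX₃, hg₃, hc₃, hm₃⟩ := hp'.good
  obtain ⟨S₄, hX₄, hg₄, hc₄, hm₄⟩ := hq'.good
  have hg := Good.union Y (Good.union Y hg₁ hg₂) (Good.union Y hg₃ hg₄)
  refine ⟨(S₁ ∪ S₂) ∪ (S₃ ∪ S₄),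
    Finset.union_subset (Finset.union_subset hX₁ hX₂) (Finset.union_subset hX₃ hX₄), ?_, ?_⟩
  · have u1 := Finset.card_union_le S₁ S₂
    have u2 := Finset.card_union_le S₃ S₄
    have u3 := Finset.card_union_le (S₁ ∪ S₂) (S₃ ∪ S₄)
    omega
  · set S := (S₁ ∪ S₂) ∪ (S₃ ∪ S₄) with hS
    have s1 : S₁ ⊆ S := by intro a ha; simp [hS, ha]
    have s2 : S₂ ⊆ S := by intro a ha; simp [hS, ha]
    have s3 : S₃ ⊆ S := by intro a ha; simp [hS, ha]
    have s4 : S₄ ⊆ S := by intro a ha; simp [hS, ha]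
    have hsub : (S.biUnion fun x => Finset.univ.image (Y.bin x)) ⊆
        (Y.labels S).image (Y.binOf r) := by
      intro c hc
      simp only [Finset.mem_biUnion, Finset.mem_image, Finset.mem_univ, true_and] at hc
      obtain ⟨e, he, j, rfl⟩ := hc
      obtain ⟨a, ha, h⟩ := hg e he j
      exact Finset.mem_image.2 ⟨a, ha, h⟩
    have hcard := Finset.card_le_card hsub
    have htwo := card_image_add_two_le (f := Y.binOf r) (Y.labels_mono s1 hm₁)
      (Y.labels_mono s2 hm₂) (Y.labels_mono s3 hm₃) (Y.labels_mono s4 hm₄) hpq hpq'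
      (hp.bin.trans hq.bin.symm) (hp'.bin.trans hq'.bin.symm) h1 h2
    have hl := Y.card_labels_le S
    omega

theorem main [DecidableEq B] [NeZero d] (hd : 2 ≤ d) {k : ℕ} (hk : 1 ≤ k) (r : B)
    (hr : k + 1 ≤ Y.load r) :
    containsCopy (BEdges d k) X (fun x => Finset.univ.image (Y.bin x)) ∨
      ∃ S ⊆ X, S.card ≤ 8 * k ∧
        (S.biUnion fun x => Finset.univ.image (Y.bin x)).card + 1 ≤ (d - 1) * S.card := by
  by_contra! hcon
  obtain ⟨hcopy, hdense⟩ := hcon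
  have hdense' : ¬ ∃ S ⊆ X, S.card ≤ 8 * k ∧
      (S.biUnion fun x => Finset.univ.image (Y.bin x)).card + 1 ≤ (d - 1) * S.card := by
    rintro ⟨S, h1, h2, h3⟩
    have := hdense S h1 h2
    omega
  set x := Y.key r k with hx
  have hxt : Y.bin x (Y.top x) = r := Y.bin_key_top r k hr
  have hxh : Y.ht x = k := Y.ht_key r k hr
  obtain ⟨i, hi⟩ : ∃ i : Fin d, i ≠ Y.top x := by
    have : Nontrivial (Fin d) := Fin.nontrivial_iff_two_le.2 hd
    exact exists_ne _
  have hroot : Y.Inv (k + 1) r (k + 1) r none :=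
    ⟨hr, rfl, by simp, ∅, by simp, by simp [Good], by simp, Y.none_mem_labels⟩
  have h₀ : Y.Inv (k + 1) r k r none := by
    have := hroot.step (Y.top x)
    rw [← hx, hxt] at this
    simpa only [lab, ← hx, if_true] using this
  have h₁ : Y.Inv (k + 1) r k (Y.bin x i) (some (x, i)) := by
    have := hroot.step i
    rw [← hx] at this
    simpa only [lab, ← hx, hi, if_false] using this
  have hcoll : ∀ b p, Y.Inv (k + 1) r k b p → ∃ m₁ b₁ q q', q ≠ q' ∧
      Y.Reach k b p m₁ b₁ q ∧ Y.Reach k b p m₁ b₁ q' := by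
    intro b p h
    have hn : ¬ Function.Injective (Y.unfold k b) := fun hinj =>
      hcopy (Y.containsCopy_of_injective k b h.le hinj)
    simp only [Function.Injective, not_forall] at hn
    obtain ⟨s, s', heq, hne⟩ := hn
    exact exists_collision h k b b p p s s' .start .start (fun _ _ => hne) heq
  obtain ⟨m, b, p, q, hpq, hp, hq⟩ := hcoll _ _ h₀
  obtain ⟨m', b', p', q', hpq', hp', hq'⟩ := hcoll _ _ h₁
  by_cases hshare : p = p' ∨ p = q'
  · have hab : ∃ e j, p = some (e, j) ∧ ∃ m₁ b₁ u u', u ≠ u' ∧ Y.Reach k r none m₁ b₁ u ∧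
        Y.Reach k (Y.bin x i) (some (x, i)) m₁ b₁ u' ∧ Y.ht e < m₁ := by
      -- The label `p` occurs in both unfoldings, and the collision above it does not involve `p`.
      rcases hshare with h | h
      · exact collision_above hxh h₀ h₁ hp m' b' (h ▸ hp')
      · exact collision_above hxh h₀ h₁ hp m' b' (h ▸ hq')
    obtain ⟨e, j, hpe, m₁, b₁, u, u', huu, hu, hu', hlt⟩ := hab
    refine hdense' (dense_of_collisions hk (hp.inv h₀) (hq.inv h₀) (hu.inv h₀) (hu'.inv h₁)
      hpq huu ?_ ?_)
    · intro h
      have := (hu.inv h₀).ht e j (h ▸ hpe)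
      omega
    · intro h
      have := (hu'.inv h₁).ht e j (h ▸ hpe)
      omega
  · push Not at hshare
    exact hdense' (dense_of_collisions hk (hp.inv h₀) (hq.inv h₀) (hp'.inv h₁) (hq'.inv h₁)
      hpq hpq' hshare.1 hshare.2)

end Sys

/-! ### Runs of the `d`-choice paradigm -/

theorem exists_key_of_lt_loadAt {α β : Type*} [DecidableEq β] {d : ℕ} (h : Fin d → α → β)
    (σ : α → Fin d) (L : List α) (b : β × Fin d) (m : ℕ) (t : ℕ) (ht : t ≤ L.length)
    (hm : m < loadAt h σ (L.take t) b) :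
    ∃ i : Fin L.length, (h (σ (L.get i)) (L.get i), σ (L.get i)) = b ∧
      loadAt h σ (L.take i) b = m := by
  induction t with
  | zero => simp [loadAt] at hm
  | succ t ih =>
    by_cases hm' : m < loadAt h σ (L.take t) b
    · exact ih (by omega) hm'
    · have htl : t < L.length := by omega
      rw [List.take_succ_eq_append_getElem htl] at hm
      simp only [loadAt, List.filter_append, List.length_append] at hm hm'
      by_cases hb : (h (σ L[t]) L[t], σ L[t]) = b
      · refine ⟨⟨t, htl⟩, hb, ?_⟩
        simp only [List.filter_cons, hb, decide_true, if_true, List.filter_nil,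
          List.length_singleton] at hm
        simp only [loadAt]
        omega
      · simp [hb] at hm
        omega

theorem loadAt_take_le {α β : Type*} [DecidableEq β] {d : ℕ} (h : Fin d → α → β)
    (σ : α → Fin d) (L : List α) (t : ℕ) (b : β × Fin d) :
    loadAt h σ (L.take t) b ≤ loadAt h σ L b :=
  ((List.take_sublist t L).filter _).length_le

theorem exists_sys {α β : Type*} [DecidableEq α] [DecidableEq β] {d : ℕ} [Nonempty α]
    {X : Finset α} (h : Fin d → α → β) (L : List α) (hL : L.Nodup) (hX : ∀ x, x ∈ L ↔ x ∈ X)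
    (σ : α → Fin d) (hσ : validPlacement h L σ) :
    ∃ Y : Sys α (β × Fin d) d X, Y.load = loadAt h σ L ∧ Y.bin = fun x j => (h j x, j) := by
  have hex : ∀ (b : β × Fin d) (m : ℕ), m < loadAt h σ L b →
      ∃ e : α, (h (σ e) e, σ e) = b ∧ (∀ j, m ≤ loadAt h σ L (h j e, j)) ∧
        loadAt h σ (L.take (L.idxOf e)) (h (σ e) e, σ e) = m ∧ e ∈ X := by
    intro b m hm
    obtain ⟨i, hi, him⟩ := exists_key_of_lt_loadAt h σ L b m L.length le_rfl (by simpa using hm)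
    refine ⟨L.get i, hi, fun j => ?_, ?_, (hX _).1 (List.get_mem _ _)⟩
    · have h1 := hσ i j
      rw [hi, him] at h1
      exact h1.trans (loadAt_take_le h σ L i _)
    · rw [List.get_eq_getElem] at hi ⊢
      rw [hL.idxOf_getElem, hi, him]
  choose! key h1 h2 h3 h4 using hex
  exact ⟨{  bin := fun x j => (h j x, j)
            top := σ
            load := loadAt h σ L
            key := key
            ht := fun e => loadAt h σ (L.take (L.idxOf e)) (h (σ e) e, σ e)
            bin_key_top := h1
            le_load := fun b m j hm => h2 b m hm j
            ht_key := h3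
            key_mem := h4 }, rfl, rfl⟩

theorem stmt13 (d : ℕ) (hd : 2 ≤ d) :
    haveI : NeZero d := ⟨by omega⟩
    ∃ β : ℝ, ∀ (α : Type) [DecidableEq α],
      ∀ (X : Finset α) (g : ℕ) (h : Fin d → α → Fin g) (L : List α),
        L.Nodup → (∀ x, x ∈ L ↔ x ∈ X) →
        ∀ σ : α → Fin d, validPlacement h L σ →
        ∀ k : ℕ, 1 ≤ k →
        (∃ bin : Fin g × Fin d, k + 1 ≤ loadAt h σ L bin) →
        containsCopy (BEdges d k) X
            (fun x => Finset.univ.image fun j : Fin d => (h j x, j)) ∨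
          ∃ S ⊆ X, (S.card : ℝ) ≤ β * k ∧
            (S.biUnion fun x => Finset.univ.image fun j : Fin d => (h j x, j)).card + 1 ≤
              (d - 1) * S.card := by
  have : NeZero d := ⟨by omega⟩
  refine ⟨8, ?_⟩
  intro α _ X g h L hL hX σ hσ k hk ⟨r, hr⟩
  have : Nonempty α := by
    rcases L with _ | ⟨a, _⟩
    · simp [loadAt] at hr
    · exact ⟨a⟩
  obtain ⟨Y, hload, hbin⟩ := exists_sys h L hL hX σ hσ
  have hmain := Sys.main (Y := Y) hd hk r (by rw [hload]; exact hr)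
  rw [hbin] at hmain
  rcases hmain with hc | ⟨S, hSX, hS, hV⟩
  · exact Or.inl hc
  · exact Or.inr ⟨S, hSX, by exact_mod_cast hS, hV⟩
end

section
/- Let d ≥ 2 and let X be a finite set of keys inserted into the bins [g]×{1,…,d} by the d-choice paradigm with the Always-Go-Left tie-breaking algorithm, using arbitrary functions h_1,…,h_d : X → [g] and any insertion order. There exists a constant β, depending only on d, such that if after all insertions some bin in group i (i.e., of the form (v,i)) has load at least k+1 (for some k ≥ 1), then the hash graph either contains a copy of the d-ary Fibonacci tree S_i(k), or contains a subgraph (V,E) with |E| ≤ β·k and |V| ≤ (d−1)|E| − 1. -/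
/-- A run of the `d`-choice paradigm with the Always-Go-Left tie-breaking rule: each key
goes to a bin of minimal load, and any group of strictly smaller index has strictly
larger load. -/
def alwaysGoLeftPlacement {α β : Type*} [DecidableEq β] {d : ℕ} (h : Fin d → α → β)
    (L : List α) (σ : α → Fin d) : Prop :=
  validPlacement h L σ ∧
    ∀ (t : Fin L.length) (j : Fin d), j < σ (L.get t) →
      loadAt h σ (L.take t) (h (σ (L.get t)) (L.get t), σ (L.get t)) <
        loadAt h σ (L.take t) (h j (L.get t), j)

/-- The edge set of the `d`-ary Fibonacci tree `S_i(k)` (with `i` zero-based: `SEdges d k i`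
is the tree `S_{i+1}(k)` of the paper).  Vertices are addressed by lists over `Fin d`:
the vertex `v_j` of the top edge is the root of the `j`-th copy, and the `j`-th copy
consists of the addresses starting with `j`.  The root of `S_i(k)` is `List.replicate k i`. -/
def SEdges (d : ℕ) [NeZero d] : (k : ℕ) → (i : Fin d) → Finset (Finset (List (Fin d)))
  | 0, _ => ∅
  | (k + 1), i =>
      insert
        (Finset.univ.image fun j : Fin d =>
          if j < i then j :: List.replicate (k + 1) j else j :: List.replicate k j)
        (Finset.univ.biUnion fun j : Fin d =>
          if _h : j < i then (SEdges d (k + 1) j).image fun e => e.image (List.cons j)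
          else (SEdges d k j).image fun e => e.image (List.cons j))
  termination_by k i => (k, (i : ℕ))

/-! ### Heights of keys -/

section Heights

variable {α : Type*} {d g : ℕ} (h : Fin d → α → Fin g) (σ : α → Fin d)

lemma loadAt_snoc (P : List α) (x : α) (b : Fin g × Fin d) :
    loadAt h σ (P ++ [x]) b = loadAt h σ P b + if (h (σ x) x, σ x) = b then 1 else 0 := by
  unfold loadAt
  by_cases hb : (h (σ x) x, σ x) = b <;> simp [List.filter_append, hb]

variable [DecidableEq α]

/-- The height of a key in its bin, counted from `1`, under the insertion order `L`. -/
def height (L : List α) (x : α) : ℕ :=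
  loadAt h σ (L.take (L.idxOf x)) (h (σ x) x, σ x) + 1

lemma exists_key_of_le_load (L : List α) (hL : L.Nodup) (n : ℕ) (hn : n ≤ L.length)
    (b : Fin g × Fin d) (l : ℕ) (hl : 1 ≤ l) (hl' : l ≤ loadAt h σ (L.take n) b) :
    ∃ x ∈ L, (h (σ x) x, σ x) = b ∧ height h σ L x = l := by
  induction n with
  | zero => simp [loadAt] at hl'; omega
  | succ n ih =>
    by_cases hle : l ≤ loadAt h σ (L.take n) b
    · exact ih (by omega) hle
    · have hlt : n < L.length := by omega
      rw [← List.take_append_getElem hlt, loadAt_snoc] at hl'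
      split_ifs at hl' with hb
      · refine ⟨L[n], List.getElem_mem hlt, hb, ?_⟩
        unfold height
        rw [hL.idxOf_getElem n hlt, hb]
        omega
      · omega

/-- Always-Go-Left fills every bin of `x` at least up to the lexicographic position of `x`. -/
lemma exists_key_below (L : List α) (hL : L.Nodup) (hσ : alwaysGoLeftPlacement h L σ)
    (x : α) (hx : x ∈ L) (j : Fin d) (l : ℕ) (hl : 1 ≤ l)
    (hlt : d * l + j < d * height h σ L x + σ x) :
    ∃ y ∈ L, σ y = j ∧ h j y = h j x ∧ height h σ L y = l := by
  have ht : L.idxOf x < L.length := List.idxOf_lt_length_of_mem hx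
  have hget : L.get ⟨L.idxOf x, ht⟩ = x := by simp
  have h1 := hσ.1 ⟨L.idxOf x, ht⟩ j
  have h2 := hσ.2 ⟨L.idxOf x, ht⟩ j
  rw [hget] at h1 h2
  simp only at h1 h2
  have hle : l ≤ loadAt h σ (L.take (L.idxOf x)) (h j x, j) := by
    have hj := j.isLt
    have hs := (σ x).isLt
    unfold height at hlt
    set a := loadAt h σ (L.take (L.idxOf x)) (h (σ x) x, σ x) with ha
    have hla : l ≤ a + 1 := by
      by_contra hcon
      have : d * (a + 2) ≤ d * l := Nat.mul_le_mul_left d (by omega)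
      nlinarith
    rcases Nat.lt_or_ge l (a + 1) with h3 | h3
    · omega
    · have h4 : l = a + 1 := by omega
      subst h4
      have h5 : j < σ x := by
        rw [Fin.lt_def]; omega
      have := h2 h5
      omega
  obtain ⟨y, hy, hb, hh⟩ := exists_key_of_le_load h σ L hL _ ht.le _ l hl hle
  simp only [Prod.mk.injEq] at hb
  obtain ⟨hb1, hb2⟩ := hb
  exact ⟨y, hy, hb2, by rw [hb2] at hb1; exact hb1, hh⟩

end Heights

/-! ### Children and descendants -/

section Forest

variable {α : Type*} {d g : ℕ} (h : Fin d → α → Fin g) (σ : α → Fin d) (ht : α → ℕ)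
  (X : Finset α)

/-- The pair `(ht x, σ x)`, ordered lexicographically and encoded as a natural number. -/
def rank (x : α) : ℕ := d * ht x + σ x

/-- The key `z` lies in a bin of `p` other than the bin of `p` itself, at a lower rank. -/
def Child (p z : α) : Prop :=
  z ∈ X ∧ σ z ≠ σ p ∧ h (σ z) p = h (σ z) z ∧ rank σ ht z < rank σ ht p

/-- Descendants of a key; every key is its own descendant. -/
abbrev Desc : α → α → Prop := Relation.ReflTransGen (Child h σ ht X)

variable {h σ ht X}

lemma Desc.rank_le {p z : α} (hd : Desc h σ ht X p z) : rank σ ht z ≤ rank σ ht p := by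
  induction hd with
  | refl => exact le_rfl
  | tail _ hc ih => exact hc.2.2.2.le.trans ih

lemma Desc.mem {R : Set α} (hR : ∀ p ∈ R, ∀ z, Child h σ ht X p z → z ∈ R) {p z : α}
    (hp : p ∈ R) (hd : Desc h σ ht X p z) : z ∈ R := by
  induction hd with
  | refl => exact hp
  | tail _ hc ih => exact hR _ ih _ hc

/-- If distinct slots of `R` point to distinct bins, then parents in `R` are unique, so the
ancestors of a key form a chain. -/
lemma Desc.total {R : Set α} (hR : ∀ p ∈ R, ∀ z, Child h σ ht X p z → z ∈ R)
    (hinj : ∀ p ∈ R, ∀ q ∈ R, ∀ j, j ≠ σ p → j ≠ σ q → h j p = h j q → p = q)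
    {a b w : α} (ha : a ∈ R) (hb : b ∈ R)
    (haw : Desc h σ ht X a w) (hbw : Desc h σ ht X b w) :
    Desc h σ ht X a b ∨ Desc h σ ht X b a := by
  induction haw with
  | refl => exact Or.inr hbw
  | tail hap hc ih =>
    rcases Relation.ReflTransGen.cases_tail hbw with rfl | ⟨q, hbq, hq⟩
    · exact Or.inl (hap.tail hc)
    · have := hinj _ (Desc.mem hR ha hap) q (Desc.mem hR hb hbq) _ hc.2.1 hq.2.1
        (hc.2.2.1.trans hq.2.2.1.symm)
      subst this
      exact ih hbq

/-! ### Embedding the Fibonacci tree -/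

/-- The vertices of `S_i(k)`, including the root also in the edgeless case `k = 0`. -/
def treeVerts (d : ℕ) [NeZero d] (k : ℕ) (i : Fin d) : Finset (List (Fin d)) :=
  insert (List.replicate k i) ((SEdges d k i).biUnion id)

lemma mem_SEdges_succ [NeZero d] {k : ℕ} {i : Fin d} {e : Finset (List (Fin d))} :
    e ∈ SEdges d (k + 1) i ↔
      e = Finset.univ.image (fun j : Fin d =>
        j :: List.replicate (if j < i then k + 1 else k) j) ∨
      ∃ j, ∃ e' ∈ SEdges d (if j < i then k + 1 else k) j, e'.image (List.cons j) = e := by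
  rw [SEdges, Finset.mem_insert, Finset.mem_biUnion]
  refine or_congr ?_ ?_
  · have : (fun j : Fin d => if j < i then j :: List.replicate (k + 1) j
        else j :: List.replicate k j) =
        fun j : Fin d => j :: List.replicate (if j < i then k + 1 else k) j := by
      funext j; split_ifs <;> rfl
    rw [this]
  · refine exists_congr fun j => ?_
    by_cases hj : j < i <;> simp [hj]

lemma treeVerts_succ [NeZero d] {k : ℕ} {i : Fin d} {a : List (Fin d)}
    (ha : a ∈ treeVerts d (k + 1) i) :
    ∃ j, ∃ w ∈ treeVerts d (if j < i then k + 1 else k) j, a = j :: w := by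
  rw [treeVerts, Finset.mem_insert, Finset.mem_biUnion] at ha
  rcases ha with rfl | ⟨e, he, hae⟩
  · exact ⟨i, List.replicate k i, by simp [treeVerts], by simp [List.replicate_succ]⟩
  · rcases mem_SEdges_succ.1 he with rfl | ⟨j, e', he', rfl⟩
    · simp only [id, Finset.mem_image] at hae
      obtain ⟨j, -, rfl⟩ := hae
      exact ⟨j, _, by simp [treeVerts], rfl⟩
    · simp only [id, Finset.mem_image] at hae
      obtain ⟨w, hw, rfl⟩ := hae
      exact ⟨j, w, Finset.mem_insert_of_mem (Finset.mem_biUnion.2 ⟨e', he', hw⟩), rfl⟩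

/-- Every bin of a descendant `x` of `r` is the bin of `r` or a slot of a descendant of `r`. -/
lemma Desc.bin_cases {r x : α} (hd : Desc h σ ht X r x) (j : Fin d) :
    (j = σ r ∧ h j x = h j r) ∨ ∃ p, Desc h σ ht X r p ∧ j ≠ σ p ∧ h j x = h j p := by
  by_cases hj : j = σ x
  · rcases Relation.ReflTransGen.cases_tail hd with rfl | ⟨p, hp, hc⟩
    · exact Or.inl ⟨hj, rfl⟩
    · subst hj
      exact Or.inr ⟨p, hp, hc.2.1, hc.2.2.1.symm⟩
  · exact Or.inr ⟨x, hd, hj, rfl⟩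

/-- A collision-free family `R` contains `S_i(k)` below every bin `(v, i)` holding `k` keys
`K 1, …, K k` of `R` with `K m` at height at least `m`.  The heights need not be exactly `m`, which
permits leaving out one of `k + 1` keys. The hypothesis `hB` says that no slot below the bin points
back to it. -/
lemma exists_embedding [NeZero d] {R : Set α}
    (hRX : ∀ p ∈ R, p ∈ X)
    (hR : ∀ p ∈ R, ∀ z, Child h σ ht X p z → z ∈ R)
    (hinj : ∀ p ∈ R, ∀ q ∈ R, ∀ j, j ≠ σ p → j ≠ σ q → h j p = h j q → p = q)
    (hbelow : ∀ x ∈ X, ∀ (j : Fin d) (l : ℕ), 1 ≤ l → d * l + j < rank σ ht x →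
      ∃ y ∈ X, σ y = j ∧ h j y = h j x ∧ ht y = l) :
    ∀ (k : ℕ) (i : Fin d) (v : Fin g) (K : ℕ → α),
      (∀ m, 1 ≤ m → m ≤ k → K m ∈ R ∧ σ (K m) = i ∧ h i (K m) = v ∧ m ≤ ht (K m)) →
      (∀ m, 1 ≤ m → m ≤ k → ∀ n, 1 ≤ n → n ≤ k → K m = K n → m = n) →
      (∀ m, 1 ≤ m → m ≤ k → ∀ p, Desc h σ ht X (K m) p → i ≠ σ p → h i p ≠ v) →
      ∃ φ : List (Fin d) → Fin g × Fin d, φ (List.replicate k i) = (v, i) ∧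
        Set.InjOn φ ↑(treeVerts d k i) ∧
        ∀ e ∈ SEdges d k i, ∃ x, ∃ m, 1 ≤ m ∧ m ≤ k ∧ Desc h σ ht X (K m) x ∧
          e.image φ = Finset.univ.image fun j : Fin d => (h j x, j) := by
  intro k
  induction k with
  | zero =>
    intro i v K _ _ _
    refine ⟨fun _ => (v, i), rfl, ?_, ?_⟩ <;> simp [treeVerts, SEdges]
  | succ k ihk =>
    intro i
    induction i using WellFoundedLT.induction with
    | ind i ihi =>
    intro v K hK hKinj hB
    -- the edge of `K (k + 1)` is the image of the top edge of the tree
    obtain ⟨hxR, hxσ, hxv, hxht⟩ := hK (k + 1) (by omega) le_rfl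
    set x := K (k + 1) with hx
    -- the keys below the bin of `x` in group `j` that carry the `j`-th subtree
    have hsub : ∀ j : Fin d, ∃ K' : ℕ → α,
        ∀ m, 1 ≤ m → m ≤ (if j < i then k + 1 else k) →
          σ (K' m) = j ∧ h j (K' m) = h j x ∧ m ≤ ht (K' m) ∧
            (j = i → K' m = K m) ∧ (j ≠ i → Child h σ ht X x (K' m) ∧ ht (K' m) = m) := by
      intro j
      by_cases hji : j = i
      · subst hji
        refine ⟨K, fun m hm hm' => ?_⟩
        simp only [lt_irrefl, if_false] at hm'
        obtain ⟨-, h2, h3, h4⟩ := hK m hm (by omega)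
        exact ⟨h2, h3.trans hxv.symm, h4, fun _ => rfl, fun hne => absurd rfl hne⟩
      · have : ∀ m, ∃ y, 1 ≤ m → m ≤ (if j < i then k + 1 else k) →
            σ y = j ∧ h j y = h j x ∧ m ≤ ht y ∧
            (j = i → y = K m) ∧ (j ≠ i → Child h σ ht X x y ∧ ht y = m) := by
          intro m
          by_cases hm : 1 ≤ m ∧ m ≤ (if j < i then k + 1 else k)
          · have hlt : d * m + j < rank σ ht x := by
              unfold rank
              rw [hxσ]
              have hjd := j.isLt
              split_ifs at hm with hlt
              · have : d * m ≤ d * ht x := Nat.mul_le_mul_left d (by omega)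
                rw [Fin.lt_def] at hlt
                omega
              · have : d * (m + 1) ≤ d * ht x := Nat.mul_le_mul_left d (by omega)
                rw [Nat.mul_add] at this
                omega
            obtain ⟨y, hyX, hyσ, hyh, hyt⟩ := hbelow x (hRX x hxR) j m hm.1 hlt
            refine ⟨y, fun _ _ => ⟨hyσ, hyh, hyt.ge, fun h' => absurd h' hji,
              fun _ => ⟨⟨hyX, ?_, ?_, ?_⟩, hyt⟩⟩⟩
            · rw [hyσ, hxσ]; exact hji
            · rw [hyσ, hyh]
            · have : rank σ ht y = d * m + j := by unfold rank; rw [hyσ, hyt]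
              rw [this]; exact hlt
          · exact ⟨x, fun h1 h2 => absurd ⟨h1, h2⟩ hm⟩
        choose K' hK' using this
        exact ⟨K', hK'⟩
    choose K' hK' using hsub
    set n : Fin d → ℕ := fun j => if j < i then k + 1 else k with hn
    have hni : n i = k := by simp [hn]
    -- the keys of the `j`-th subtree
    let D : Fin d → α → Prop := fun j p => ∃ m, 1 ≤ m ∧ m ≤ n j ∧ Desc h σ ht X (K' j m) p
    have hDK : ∀ j p, D j p → ∃ m, 1 ≤ m ∧ m ≤ k + 1 ∧ Desc h σ ht X (K m) p := by
      rintro j p ⟨m, hm, hm', hd⟩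
      obtain ⟨-, -, -, h4, h5⟩ := hK' j m hm hm'
      by_cases hji : j = i
      · rw [h4 hji] at hd
        subst hji
        exact ⟨m, hm, by omega, hd⟩
      · exact ⟨k + 1, by omega, le_rfl, Relation.ReflTransGen.head (h5 hji).1 hd⟩
    have hKR : ∀ m, 1 ≤ m → m ≤ k + 1 → ∀ p, Desc h σ ht X (K m) p → p ∈ R :=
      fun m hm hm' p hp => Desc.mem hR (hK m hm hm').1 hp
    have hDR : ∀ j p, D j p → p ∈ R := by
      intro j p hp
      obtain ⟨m, hm, hm', hd⟩ := hDK j p hp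
      exact hKR m hm hm' p hd
    have hDB : ∀ j p, D j p → i ≠ σ p → h i p ≠ v := by
      intro j p hp
      obtain ⟨m, hm, hm', hd⟩ := hDK j p hp
      exact hB m hm hm' p hd
    have hDx : ∀ j, ¬ D j x := by
      rintro j ⟨m, hm, hm', hd⟩
      obtain ⟨-, -, -, h4, h5⟩ := hK' j m hm hm'
      by_cases hji : j = i
      · rw [h4 hji] at hd
        subst hji
        rcases Relation.ReflTransGen.cases_tail hd with he | ⟨p, hp, hc⟩
        · have := hKinj m hm (by omega) (k + 1) (by omega) le_rfl he.symm
          omega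
        · obtain ⟨-, h6, h7, -⟩ := hc
          rw [hxσ] at h6 h7
          exact hB m hm (by omega) p hp h6 (h7.trans hxv)
      · exact absurd hd.rank_le (not_le.2 (h5 hji).1.2.2.2)
    have hK'D : ∀ j m, 1 ≤ m → m ≤ n j → D j (K' j m) :=
      fun j m hm hm' => ⟨m, hm, hm', Relation.ReflTransGen.refl⟩
    have hcross : ∀ j j' m m', j ≠ j' → 1 ≤ m → m ≤ n j → 1 ≤ m' → m' ≤ n j' →
        ¬ Desc h σ ht X (K' j m) (K' j' m') := by
      intro j j' m m' hjj hm1 hm2 hm1' hm2' hd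
      have a := hK' j m hm1 hm2
      have b := hK' j' m' hm1' hm2'
      rcases Relation.ReflTransGen.cases_tail hd with he | ⟨p, hp, hc⟩
      · rw [← a.1, ← he, b.1] at hjj
        exact hjj rfl
      · have hDp : D j p := ⟨m, hm1, hm2, hp⟩
        obtain ⟨-, h6, h7, -⟩ := hc
        rw [b.1] at h6 h7
        by_cases hji : j' = i
        · subst hji
          exact hDB j p hDp h6 (h7.trans (b.2.1.trans hxv))
        · have := hinj p (hDR j p hDp) x hxR j' h6 (by rw [hxσ]; exact hji) (h7.trans b.2.1)
          rw [this] at hDp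
          exact hDx j hDp
    have hdisj : ∀ j j' p, j ≠ j' → D j p → ¬ D j' p := by
      rintro j j' p hjj ⟨m, hm1, hm2, hd⟩ ⟨m', hm1', hm2', hd'⟩
      rcases Desc.total hR hinj (hDR j _ (hK'D j m hm1 hm2)) (hDR j' _ (hK'D j' m' hm1' hm2'))
        hd hd' with h1 | h1
      · exact hcross j j' m m' hjj hm1 hm2 hm1' hm2' h1
      · exact hcross j' j m' m hjj.symm hm1' hm2' hm1 hm2 h1
    have hrec : ∀ j : Fin d, ∃ φ : List (Fin d) → Fin g × Fin d,
        φ (List.replicate (n j) j) = (h j x, j) ∧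
        Set.InjOn φ ↑(treeVerts d (n j) j) ∧
        ∀ e ∈ SEdges d (n j) j, ∃ z, ∃ m, 1 ≤ m ∧ m ≤ n j ∧ Desc h σ ht X (K' j m) z ∧
          e.image φ = Finset.univ.image fun j : Fin d => (h j z, j) := by
      intro j
      have c1 : ∀ m, 1 ≤ m → m ≤ n j →
          K' j m ∈ R ∧ σ (K' j m) = j ∧ h j (K' j m) = h j x ∧ m ≤ ht (K' j m) := by
        intro m hm hm'
        obtain ⟨h1, h2, h3, -, -⟩ := hK' j m hm hm'
        exact ⟨hDR j _ (hK'D j m hm hm'), h1, h2, h3⟩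
      have c2 : ∀ m, 1 ≤ m → m ≤ n j → ∀ m', 1 ≤ m' → m' ≤ n j →
          K' j m = K' j m' → m = m' := by
        intro m hm1 hm2 m' hm1' hm2' he
        obtain ⟨-, -, -, h4, h5⟩ := hK' j m hm1 hm2
        obtain ⟨-, -, -, h4', h5'⟩ := hK' j m' hm1' hm2'
        by_cases hji : j = i
        · rw [h4 hji, h4' hji] at he
          subst hji
          exact hKinj m hm1 (by omega) m' hm1' (by omega) he
        · rw [← (h5 hji).2, ← (h5' hji).2, he]
      have c3 : ∀ m, 1 ≤ m → m ≤ n j → ∀ p, Desc h σ ht X (K' j m) p → j ≠ σ p →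
          h j p ≠ h j x := by
        intro m hm hm' p hp hjp he
        have hDp : D j p := ⟨m, hm, hm', hp⟩
        by_cases hji : j = i
        · subst hji
          exact hDB j p hDp hjp (he.trans hxv)
        · have := hinj p (hDR j p hDp) x hxR j hjp (by rw [hxσ]; exact hji) he
          rw [this] at hDp
          exact hDx j hDp
      by_cases hlt : j < i
      · have hnj : n j = k + 1 := by simp [hn, hlt]
        rw [hnj] at c1 c2 c3 ⊢
        exact ihi j hlt (h j x) (K' j) c1 c2 c3
      · have hnj : n j = k := by simp [hn, hlt]
        rw [hnj] at c1 c2 c3 ⊢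
        exact ihk j (h j x) (K' j) c1 c2 c3
    choose φ hφr hφi hφe using hrec
    -- each vertex of the `j`-th subtree goes to the root bin or to a slot owned by this subtree
    have hdesc : ∀ j, ∀ w ∈ treeVerts d (n j) j,
        (j = i ∧ φ j w = (v, i)) ∨
        ∃ p jj, jj ≠ σ p ∧ φ j w = (h jj p, jj) ∧ (D j p ∨ (p = x ∧ jj = j)) := by
      intro j w hw
      have hroot : (j = i ∧ ((h j x, j) : Fin g × Fin d) = (v, i)) ∨
          ∃ p jj, jj ≠ σ p ∧ ((h j x, j) : Fin g × Fin d) = (h jj p, jj) ∧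
            (D j p ∨ (p = x ∧ jj = j)) := by
        by_cases hji : j = i
        · subst hji; exact Or.inl ⟨rfl, by rw [hxv]⟩
        · exact Or.inr ⟨x, j, by rw [hxσ]; exact hji, rfl, Or.inr ⟨rfl, rfl⟩⟩
      rw [treeVerts, Finset.mem_insert, Finset.mem_biUnion] at hw
      rcases hw with rfl | ⟨e, he, hwe⟩
      · rw [hφr]; exact hroot
      · obtain ⟨z, m, hm, hm', hd, himg⟩ := hφe j e he
        have : φ j w ∈ e.image (φ j) := Finset.mem_image_of_mem _ hwe
        rw [himg, Finset.mem_image] at this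
        obtain ⟨jj, -, hjj⟩ := this
        rw [← hjj]
        have a := hK' j m hm hm'
        rcases hd.bin_cases jj with ⟨h1, h2⟩ | ⟨p, hp, h1, h2⟩
        · rw [a.1] at h1
          subst h1
          rw [h2, a.2.1]
          exact hroot
        · exact Or.inr ⟨p, jj, h1, by rw [h2], Or.inl ⟨m, hm, hm', hp⟩⟩
    have hxB : ∀ p j, (D j p ∨ p = x) → i ≠ σ p → h i p ≠ v := by
      rintro p j (hp | rfl)
      · exact hDB j p hp
      · exact fun h' => absurd hxσ.symm h'
    have hpR : ∀ p j, (D j p ∨ p = x) → p ∈ R := by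
      rintro p j (hp | rfl)
      · exact hDR j p hp
      · exact hxR
    have hsep : ∀ j j', j ≠ j' → ∀ w ∈ treeVerts d (n j) j, ∀ w' ∈ treeVerts d (n j') j',
        φ j w ≠ φ j' w' := by
      intro j j' hjj w hw w' hw' he
      rcases hdesc j w hw with ⟨h1, h2⟩ | ⟨p, a, h1, h2, h3⟩ <;>
        rcases hdesc j' w' hw' with ⟨h1', h2'⟩ | ⟨p', a', h1', h2', h3'⟩
      · exact hjj (h1.trans h1'.symm)
      · rw [h2, h2', Prod.mk.injEq] at he
        obtain ⟨e1, e2⟩ := he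
        subst e2
        exact hxB p' j' (h3'.imp_right And.left) h1' e1.symm
      · rw [h2, h2', Prod.mk.injEq] at he
        obtain ⟨e1, e2⟩ := he
        subst e2
        exact hxB p j (h3.imp_right And.left) h1 e1
      · rw [h2, h2', Prod.mk.injEq] at he
        obtain ⟨e1, e2⟩ := he
        subst e2
        have := hinj p (hpR p j (h3.imp_right And.left)) p' (hpR p' j' (h3'.imp_right And.left))
          a h1 h1' e1
        subst this
        rcases h3 with h3 | ⟨h3, h4⟩ <;> rcases h3' with h3' | ⟨h3', h4'⟩
        · exact hdisj j j' p hjj h3 h3'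
        · rw [h3'] at h3; exact hDx j h3
        · rw [h3] at h3'; exact hDx j' h3'
        · exact hjj (h4.symm.trans h4')
    let Φ : List (Fin d) → Fin g × Fin d := fun a =>
      match a with
      | [] => (v, i)
      | j :: w => φ j w
    refine ⟨Φ, ?_, ?_, ?_⟩
    · have := hφr i
      rw [hni, hxv] at this
      rw [List.replicate_succ]
      exact this
    · intro a ha b hb hab
      obtain ⟨j, w, hw, rfl⟩ := treeVerts_succ ha
      obtain ⟨j', w', hw', rfl⟩ := treeVerts_succ hb
      by_cases hjj : j = j'
      · subst hjj
        rw [hφi j hw hw' hab]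
      · exact absurd hab (hsep j j' hjj w hw w' hw')
    · intro e he
      rcases mem_SEdges_succ.1 he with rfl | ⟨j, e', he', rfl⟩
      · refine ⟨x, k + 1, by omega, le_rfl, Relation.ReflTransGen.refl, ?_⟩
        rw [Finset.image_image]
        congr 1
        funext j
        exact hφr j
      · obtain ⟨z, m, hm, hm', hd, himg⟩ := hφe j e' he'
        obtain ⟨m0, hm0, hm0', hd0⟩ := hDK j z ⟨m, hm, hm', hd⟩
        refine ⟨z, m0, hm0, hm0', hd0, ?_⟩
        rw [Finset.image_image, ← himg]
        rfl

/-! ### Slots and dense subgraphs -/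

variable (h σ) in
/-- The bin a slot points to: `none` is the root slot, pointing to `B`. -/
def slotBin (B : Fin g × Fin d) : Option (α × Fin d) → Fin g × Fin d
  | none => B
  | some (x, j) => (h j x, j)

variable (σ) in
/-- The slots of a set of keys: the root slot, and for each key its groups other than the one it
was placed in. -/
def IsSlot (R : Set α) : Option (α × Fin d) → Prop
  | none => True
  | some (x, j) => x ∈ R ∧ j ≠ σ x

/-- Two redundant slots in an ancestor-closed set of keys make it dense. -/
lemma dense_of_two_collisions {B : Fin g × Fin d} {E : Finset α}
    (hE : ∀ z ∈ E, (h (σ z) z, σ z) = B ∨ ∃ p ∈ E, Child h σ ht X p z)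
    {s₁ s₂ t₁ t₂ : Option (α × Fin d)}
    (hs₁ : IsSlot σ E s₁) (hs₂ : IsSlot σ E s₂) (ht₁ : IsSlot σ E t₁) (ht₂ : IsSlot σ E t₂)
    (hne : s₁ ≠ s₂) (h11 : t₁ ≠ s₁) (h12 : t₁ ≠ s₂) (h21 : t₂ ≠ s₁) (h22 : t₂ ≠ s₂)
    (e₁ : slotBin h B s₁ = slotBin h B t₁) (e₂ : slotBin h B s₂ = slotBin h B t₂) :
    (E.biUnion fun x => Finset.univ.image fun j : Fin d => (h j x, j)).card + 1 ≤
      (d - 1) * E.card := by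
  classical
  let S : Finset (Option (α × Fin d)) :=
    insert none (E.biUnion fun x => (Finset.univ.erase (σ x)).image fun j => some (x, j))
  have hS : ∀ s, IsSlot σ E s → s ∈ S := by
    rintro (_ | ⟨x, j⟩) hs
    · exact Finset.mem_insert_self _ _
    · refine Finset.mem_insert_of_mem (Finset.mem_biUnion.2 ⟨x, hs.1, ?_⟩)
      exact Finset.mem_image.2 ⟨j, Finset.mem_erase.2 ⟨hs.2, Finset.mem_univ _⟩, rfl⟩
  have hScard : S.card ≤ E.card * (d - 1) + 1 := by
    refine (Finset.card_insert_le _ _).trans (Nat.add_le_add_right ?_ 1)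
    refine Finset.card_biUnion_le_card_mul _ _ _ fun x _ => ?_
    refine Finset.card_image_le.trans ?_
    rw [Finset.card_erase_of_mem (Finset.mem_univ _), Finset.card_univ, Fintype.card_fin]
  have hcov : ∀ s, IsSlot σ E s →
      slotBin h B s ∈ ((S.erase s₁).erase s₂).image (slotBin h B) := by
    intro s hs
    by_cases c1 : s = s₁
    · rw [c1, e₁]
      exact Finset.mem_image_of_mem _
        (Finset.mem_erase.2 ⟨h12, Finset.mem_erase.2 ⟨h11, hS _ ht₁⟩⟩)
    · by_cases c2 : s = s₂
      · rw [c2, e₂]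
        exact Finset.mem_image_of_mem _
          (Finset.mem_erase.2 ⟨h22, Finset.mem_erase.2 ⟨h21, hS _ ht₂⟩⟩)
      · exact Finset.mem_image_of_mem _
          (Finset.mem_erase.2 ⟨c2, Finset.mem_erase.2 ⟨c1, hS _ hs⟩⟩)
  have hsub : (E.biUnion fun x => Finset.univ.image fun j : Fin d => (h j x, j)) ⊆
      ((S.erase s₁).erase s₂).image (slotBin h B) := by
    intro b hb
    obtain ⟨x, hx, hb⟩ := Finset.mem_biUnion.1 hb
    obtain ⟨j, -, rfl⟩ := Finset.mem_image.1 hb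
    by_cases hj : j = σ x
    · subst hj
      rcases hE x hx with hxB | ⟨p, hp, hc⟩
      · rw [hxB]; exact hcov none trivial
      · rw [← hc.2.2.1]; exact hcov (some (p, σ x)) ⟨hp, hc.2.1⟩
    · exact hcov (some (x, j)) ⟨hx, hj⟩
  have h1 := (Finset.card_le_card hsub).trans Finset.card_image_le
  rw [Finset.card_erase_of_mem (Finset.mem_erase.2 ⟨hne.symm, hS _ hs₂⟩),
    Finset.card_erase_of_mem (hS _ hs₁)] at h1
  have h2 : 2 ≤ S.card := by
    have : ({s₁, s₂} : Finset _) ⊆ S := by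
      intro s hs
      simp only [Finset.mem_insert, Finset.mem_singleton] at hs
      rcases hs with rfl | rfl
      · exact hS _ hs₁
      · exact hS _ hs₂
    have h3 := Finset.card_le_card this
    rwa [Finset.card_pair hne] at h3
  rw [Nat.mul_comm]
  omega

/-- A chain of ancestors joining a descendant of a root key to the root bin is short, since ranks
strictly decrease along it. -/
lemma exists_chain {B : Fin g × Fin d} {y x : α} {k : ℕ} (hyX : y ∈ X)
    (hyB : (h (σ y) y, σ y) = B) (hyt : ht y ≤ k + 1) (hd : Desc h σ ht X y x) :
    ∃ P ⊆ X, x ∈ P ∧ (∀ z ∈ P, (h (σ z) z, σ z) = B ∨ ∃ p ∈ P, Child h σ ht X p z) ∧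
      P.card + rank σ ht x ≤ d * (k + 2) := by
  classical
  induction hd with
  | refl =>
    refine ⟨{y}, by simpa using hyX, by simp, by simp [hyB], ?_⟩
    have h1 : d * ht y ≤ d * (k + 1) := Nat.mul_le_mul_left d hyt
    have h2 := (σ y).isLt
    have h3 : d * (k + 2) = d * (k + 1) + d := by ring
    simp only [Finset.card_singleton, rank]
    omega
  | @tail p z _ hc ih =>
    obtain ⟨P, hPX, hp, hPc, hcard⟩ := ih
    refine ⟨insert z P, Finset.insert_subset hc.1 hPX, Finset.mem_insert_self _ _, ?_, ?_⟩
    · intro w hw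
      rcases Finset.mem_insert.1 hw with rfl | hw
      · exact Or.inr ⟨p, Finset.mem_insert_of_mem hp, hc⟩
      · exact (hPc w hw).imp_right fun ⟨q, hq, hq'⟩ => ⟨q, Finset.mem_insert_of_mem hq, hq'⟩
    · have h1 := Finset.card_insert_le z P
      have h2 := hc.2.2.2
      omega

/-- If the slots other than `(x, j)` point to distinct bins, then `x` descends from at most one of
two root keys: above `x` no slot in question is `(x, j)`, so parents are unique there. -/
lemma unique_root {R : Set α} (hR : ∀ p ∈ R, ∀ z, Child h σ ht X p z → z ∈ R)
    {B : Fin g × Fin d} {x : α} {j : Fin d}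
    (hinj : ∀ s t, IsSlot σ R s → IsSlot σ R t → s ≠ some (x, j) → t ≠ some (x, j) →
      slotBin h B s = slotBin h B t → s = t)
    {y y' : α} (hy : y ∈ R) (hy' : y' ∈ R) (hyB : (h (σ y) y, σ y) = B)
    (hyB' : (h (σ y') y', σ y') = B) (hne : y ≠ y')
    {z : α} (hz : Desc h σ ht X y z) (hz' : Desc h σ ht X y' z)
    (hr : rank σ ht x ≤ rank σ ht z) : False := by
  have hslot : ∀ p w, p ∈ R → Child h σ ht X p w → rank σ ht x ≤ rank σ ht w →
      some (p, σ w) ≠ some (x, j) := by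
    intro p w _ hc hrw he
    simp only [Option.some.injEq, Prod.mk.injEq] at he
    rw [he.1] at hc
    exact absurd hc.2.2.2 (not_lt.2 hrw)
  have hroot : ∀ p w, p ∈ R → Child h σ ht X p w → rank σ ht x ≤ rank σ ht w →
      (h (σ w) w, σ w) = B → False := by
    intro p w hp hc hrw hwB
    have := hinj none (some (p, σ w)) trivial ⟨hp, hc.2.1⟩ (by simp) (hslot p w hp hc hrw)
      (by simp only [slotBin]; rw [hc.2.2.1, hwB])
    simp at this
  induction hz with
  | refl =>
    rcases Relation.ReflTransGen.cases_tail hz' with he | ⟨p, hp, hc⟩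
    · exact hne he
    · exact hroot p _ (Desc.mem hR hy' hp) hc hr hyB
  | @tail p w hyp hc ih =>
    have hpR := Desc.mem hR hy hyp
    rcases Relation.ReflTransGen.cases_tail hz' with he | ⟨q, hq, hcq⟩
    · exact hroot p w hpR hc hr (by rw [he]; exact hyB')
    · have hqR := Desc.mem hR hy' hq
      have := hinj (some (p, σ w)) (some (q, σ w)) ⟨hpR, hc.2.1⟩ ⟨hqR, hcq.2.1⟩
        (hslot p w hpR hc hr) (hslot q w hqR hcq hr)
        (by simp only [slotBin]; rw [hc.2.2.1, hcq.2.2.1])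
      simp only [Option.some.injEq, Prod.mk.injEq, and_true] at this
      subst this
      exact ih hq (hr.trans hc.2.2.2.le)

/-- If two collisions are excluded, then one can discard one of `k + 1` root keys so that the
descendants of the others have no collision at all. -/
lemma exists_collision_free {B : Fin g × Fin d} {k : ℕ} {y : ℕ → α}
    (hyB : ∀ m, 1 ≤ m → m ≤ k + 1 → (h (σ (y m)) (y m), σ (y m)) = B)
    (hyinj : ∀ m, 1 ≤ m → m ≤ k + 1 → ∀ n, 1 ≤ n → n ≤ k + 1 → y m = y n → m = n)
    (R : Set α) (hRdef : R = {w | ∃ m, 1 ≤ m ∧ m ≤ k + 1 ∧ Desc h σ ht X (y m) w})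
    (hno : ∀ s₁ s₂ t₁ t₂, IsSlot σ R s₁ → IsSlot σ R s₂ → IsSlot σ R t₁ → IsSlot σ R t₂ →
      s₁ ≠ s₂ → t₁ ≠ s₁ → t₁ ≠ s₂ → t₂ ≠ s₁ → t₂ ≠ s₂ →
      slotBin h B s₁ = slotBin h B t₁ → slotBin h B s₂ ≠ slotBin h B t₂) :
    ∃ l, 1 ≤ l ∧ l ≤ k + 1 ∧
      ∀ s t, IsSlot σ {w | ∃ m, 1 ≤ m ∧ m ≤ k + 1 ∧ m ≠ l ∧ Desc h σ ht X (y m) w} s →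
        IsSlot σ {w | ∃ m, 1 ≤ m ∧ m ≤ k + 1 ∧ m ≠ l ∧ Desc h σ ht X (y m) w} t →
        slotBin h B s = slotBin h B t → s = t := by
  have hR : ∀ p ∈ R, ∀ z, Child h σ ht X p z → z ∈ R := by
    rw [hRdef]
    rintro p ⟨m, hm, hm', hd⟩ z hc
    exact ⟨m, hm, hm', hd.tail hc⟩
  have hyR : ∀ m, 1 ≤ m → m ≤ k + 1 → y m ∈ R := by
    rw [hRdef]
    exact fun m hm hm' => ⟨m, hm, hm', Relation.ReflTransGen.refl⟩
  have hmono : ∀ l s, IsSlot σ {w | ∃ m, 1 ≤ m ∧ m ≤ k + 1 ∧ m ≠ l ∧ Desc h σ ht X (y m) w} s →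
      IsSlot σ R s := by
    rw [hRdef]
    rintro l (_ | ⟨x, j⟩) hs
    · trivial
    · obtain ⟨⟨m, hm, hm', -, hd⟩, hj⟩ := hs
      exact ⟨⟨m, hm, hm', hd⟩, hj⟩
  by_cases hall : ∀ s t, IsSlot σ R s → IsSlot σ R t → slotBin h B s = slotBin h B t → s = t
  · exact ⟨k + 1, by omega, le_rfl, fun s t hs ht' => hall s t (hmono _ s hs) (hmono _ t ht')⟩
  · have : ∃ x j t, IsSlot σ R (some (x, j)) ∧ IsSlot σ R t ∧ t ≠ some (x, j) ∧
        slotBin h B (some (x, j)) = slotBin h B t := by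
      push Not at hall
      obtain ⟨s, t, hs, ht', he, hne⟩ := hall
      rcases s with _ | ⟨x, j⟩
      · rcases t with _ | ⟨x, j⟩
        · exact absurd rfl hne
        · exact ⟨x, j, none, ht', hs, hne, he.symm⟩
      · exact ⟨x, j, t, hs, ht', hne.symm, he⟩
    obtain ⟨x, j, t, hs, ht', hne, he⟩ := this
    have hinj : ∀ a b, IsSlot σ R a → IsSlot σ R b → a ≠ some (x, j) → b ≠ some (x, j) →
        slotBin h B a = slotBin h B b → a = b := by
      intro a b ha hb hax hbx hab
      by_contra hcon
      by_cases hat : t = a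
      · subst hat
        exact hno (some (x, j)) b t t hs hb ht' ha (Ne.symm hbx) hne hcon hax hcon he hab.symm
      · exact hno (some (x, j)) a t b hs ha ht' hb (Ne.symm hax) hne hat hbx (Ne.symm hcon) he hab
    have hxR := hs.1
    rw [hRdef] at hxR
    obtain ⟨l, hl, hl', hlx⟩ := hxR
    refine ⟨l, hl, hl', fun a b ha hb hab => ?_⟩
    have hav : ∀ a, IsSlot σ {w | ∃ m, 1 ≤ m ∧ m ≤ k + 1 ∧ m ≠ l ∧ Desc h σ ht X (y m) w} a →
        a ≠ some (x, j) := by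
      rintro a ha rfl
      obtain ⟨⟨m, hm, hm', hml, hd⟩, -⟩ := ha
      exact unique_root hR hinj (hyR m hm hm') (hyR l hl hl') (hyB m hm hm') (hyB l hl hl')
        (fun e => hml (hyinj m hm hm' l hl hl' e)) hd hlx le_rfl
    exact hinj a b (hmono _ a ha) (hmono _ b hb) (hav a ha) (hav b hb) hab

/-- The theorem for heights subject to the consequence `hbelow` of the Always-Go-Left rule. -/
lemma copy_or_dense [NeZero d]
    (hbelow : ∀ x ∈ X, ∀ (j : Fin d) (l : ℕ), 1 ≤ l → d * l + j < rank σ ht x →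
      ∃ y ∈ X, σ y = j ∧ h j y = h j x ∧ ht y = l)
    (k : ℕ) (i : Fin d) (hk : 1 ≤ k) (v : Fin g) (y : ℕ → α)
    (hy : ∀ m, 1 ≤ m → m ≤ k + 1 → y m ∈ X ∧ σ (y m) = i ∧ h i (y m) = v ∧ ht (y m) = m) :
    containsCopy (SEdges d k i) X (fun x => Finset.univ.image fun j : Fin d => (h j x, j)) ∨
      ∃ S ⊆ X, S.card ≤ 12 * d * k ∧
        (S.biUnion fun x => Finset.univ.image fun j : Fin d => (h j x, j)).card + 1 ≤
          (d - 1) * S.card := by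
  classical
  have hyB : ∀ m, 1 ≤ m → m ≤ k + 1 → (h (σ (y m)) (y m), σ (y m)) = (v, i) := by
    intro m hm hm'
    obtain ⟨-, h2, h3, -⟩ := hy m hm hm'
    rw [h2, h3]
  have hyinj : ∀ m, 1 ≤ m → m ≤ k + 1 → ∀ n, 1 ≤ n → n ≤ k + 1 → y m = y n → m = n := by
    intro m hm hm' n hn hn' he
    rw [← (hy m hm hm').2.2.2, he, (hy n hn hn').2.2.2]
  set R : Set α := {w | ∃ m, 1 ≤ m ∧ m ≤ k + 1 ∧ Desc h σ ht X (y m) w} with hRdef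
  by_cases hno : ∀ s₁ s₂ t₁ t₂, IsSlot σ R s₁ → IsSlot σ R s₂ → IsSlot σ R t₁ → IsSlot σ R t₂ →
      s₁ ≠ s₂ → t₁ ≠ s₁ → t₁ ≠ s₂ → t₂ ≠ s₁ → t₂ ≠ s₂ →
      slotBin h (v, i) s₁ = slotBin h (v, i) t₁ → slotBin h (v, i) s₂ ≠ slotBin h (v, i) t₂
  · left
    obtain ⟨l, hl, hl', hfree⟩ := exists_collision_free hyB hyinj R hRdef hno
    set R' : Set α := {w | ∃ m, 1 ≤ m ∧ m ≤ k + 1 ∧ m ≠ l ∧ Desc h σ ht X (y m) w} with hR'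
    have hR'X : ∀ p ∈ R', p ∈ X := by
      rintro p ⟨m, hm, hm', -, hd⟩
      rcases Relation.ReflTransGen.cases_tail hd with rfl | ⟨q, -, hc⟩
      · exact (hy m hm hm').1
      · exact hc.1
    have hR'c : ∀ p ∈ R', ∀ z, Child h σ ht X p z → z ∈ R' := by
      rintro p ⟨m, hm, hm', hml, hd⟩ z hc
      exact ⟨m, hm, hm', hml, hd.tail hc⟩
    have hR'inj : ∀ p ∈ R', ∀ q ∈ R', ∀ j, j ≠ σ p → j ≠ σ q → h j p = h j q → p = q := by
      intro p hp q hq j hjp hjq he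
      have := hfree (some (p, j)) (some (q, j)) ⟨hp, hjp⟩ ⟨hq, hjq⟩
        (by simp only [slotBin]; rw [he])
      simpa using this
    -- the root keys with `y l` left out
    let c : ℕ → ℕ := fun m => if m < l then m else m + 1
    have hc : ∀ m, 1 ≤ m → m ≤ k → 1 ≤ c m ∧ c m ≤ k + 1 ∧ c m ≠ l ∧ m ≤ c m := by
      intro m hm hm'
      simp only [c]
      split_ifs <;> omega
    have hcR : ∀ m, 1 ≤ m → m ≤ k → y (c m) ∈ R' := fun m hm hm' =>
      ⟨c m, (hc m hm hm').1, (hc m hm hm').2.1, (hc m hm hm').2.2.1, Relation.ReflTransGen.refl⟩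
    obtain ⟨φ, -, hφi, hφe⟩ := exists_embedding hR'X hR'c hR'inj hbelow k i v (fun m => y (c m))
      (by
        intro m hm hm'
        obtain ⟨c1, c2, -, c4⟩ := hc m hm hm'
        obtain ⟨-, h2, h3, h4⟩ := hy (c m) c1 c2
        exact ⟨hcR m hm hm', h2, h3, by rw [h4]; exact c4⟩)
      (by
        intro m hm hm' n hn hn' he
        have := hyinj (c m) (hc m hm hm').1 (hc m hm hm').2.1 (c n) (hc n hn hn').1
          (hc n hn hn').2.1 he
        simp only [c] at this
        split_ifs at this <;> omega)
      (by
        intro m hm hm' p hp hip he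
        have := hfree none (some (p, i)) trivial ⟨Desc.mem hR'c (hcR m hm hm') hp, hip⟩
          (by simp only [slotBin]; rw [he])
        simp at this)
    have hex : ∀ e, ∃ x, e ∈ SEdges d k i →
        x ∈ X ∧ e.image φ = Finset.univ.image fun j : Fin d => (h j x, j) := by
      intro e
      by_cases he : e ∈ SEdges d k i
      · obtain ⟨x, m, hm, hm', hd, himg⟩ := hφe e he
        exact ⟨x, fun _ => ⟨hR'X _ (Desc.mem hR'c (hcR m hm hm') hd), himg⟩⟩
      · exact ⟨y 1, fun h' => absurd h' he⟩
    choose ψ hψ using hex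
    have hsubv : ∀ e ∈ SEdges d k i, (e : Set (List (Fin d))) ⊆ ↑(treeVerts d k i) := by
      intro e he w hw
      exact Finset.mem_insert_of_mem (Finset.mem_biUnion.2 ⟨e, he, hw⟩)
    refine ⟨φ, ψ, hφi.mono ?_, ?_, hψ⟩
    · intro w hw
      exact Finset.mem_insert_of_mem hw
    · -- distinct edges have distinct keys because `φ` is injective on vertices
      intro e he e' he' hee
      have himg : e.image φ = e'.image φ := by
        rw [(hψ e he).2, (hψ e' he').2, hee]
      have himg' : φ '' (e : Set (List (Fin d))) = φ '' (e' : Set (List (Fin d))) := by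
        rw [← Finset.coe_image, ← Finset.coe_image, himg]
      exact Finset.coe_injective ((hφi.image_eq_image_iff (hsubv e he) (hsubv e' he')).1 himg')
  · right
    push Not at hno
    obtain ⟨s₁, s₂, t₁, t₂, hs₁, hs₂, ht₁, ht₂, hne, h11, h12, h21, h22, e₁, e₂⟩ := hno
    have hchain : ∀ s, IsSlot σ R s → ∃ P ⊆ X, IsSlot σ (P : Set α) s ∧
        (∀ z ∈ P, (h (σ z) z, σ z) = (v, i) ∨ ∃ p ∈ P, Child h σ ht X p z) ∧
        P.card ≤ d * (k + 2) := by
      rintro (_ | ⟨x, j⟩) hs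
      · exact ⟨∅, by simp, trivial, by simp, by simp⟩
      · obtain ⟨⟨m, hm, hm', hd⟩, hj⟩ := hs
        obtain ⟨P, hPX, hxP, hPc, hcard⟩ :=
          exists_chain (k := k) (hy m hm hm').1 (hyB m hm hm')
            ((hy m hm hm').2.2.2.trans_le hm') hd
        exact ⟨P, hPX, ⟨hxP, hj⟩, hPc, by omega⟩
    obtain ⟨P₁, p11, p12, p13, p14⟩ := hchain s₁ hs₁
    obtain ⟨P₂, p21, p22, p23, p24⟩ := hchain s₂ hs₂
    obtain ⟨P₃, p31, p32, p33, p34⟩ := hchain t₁ ht₁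
    obtain ⟨P₄, p41, p42, p43, p44⟩ := hchain t₂ ht₂
    have hmono : ∀ (P Q : Finset α) s, P ⊆ Q → IsSlot σ (P : Set α) s → IsSlot σ (Q : Set α) s := by
      rintro P Q (_ | ⟨x, j⟩) hPQ hs
      · trivial
      · exact ⟨hPQ hs.1, hs.2⟩
    have hun : ∀ (P Q : Finset α),
        (∀ z ∈ P, (h (σ z) z, σ z) = (v, i) ∨ ∃ p ∈ P, Child h σ ht X p z) →
        (∀ z ∈ Q, (h (σ z) z, σ z) = (v, i) ∨ ∃ p ∈ Q, Child h σ ht X p z) →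
        ∀ z ∈ P ∪ Q, (h (σ z) z, σ z) = (v, i) ∨ ∃ p ∈ P ∪ Q, Child h σ ht X p z := by
      intro P Q hP hQ z hz
      rcases Finset.mem_union.1 hz with hz | hz
      · exact (hP z hz).imp_right fun ⟨p, hp, hc⟩ => ⟨p, Finset.mem_union_left _ hp, hc⟩
      · exact (hQ z hz).imp_right fun ⟨p, hp, hc⟩ => ⟨p, Finset.mem_union_right _ hp, hc⟩
    refine ⟨(P₁ ∪ P₂) ∪ (P₃ ∪ P₄), ?_, ?_, ?_⟩
    · exact Finset.union_subset (Finset.union_subset p11 p21) (Finset.union_subset p31 p41)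
    · have c1 := Finset.card_union_le (P₁ ∪ P₂) (P₃ ∪ P₄)
      have c2 := Finset.card_union_le P₁ P₂
      have c3 := Finset.card_union_le P₃ P₄
      have c4 : d * (k + 2) ≤ d * (3 * k) := Nat.mul_le_mul_left d (by omega)
      have c5 : 12 * d * k = 4 * (d * (3 * k)) := by ring
      omega
    · refine dense_of_two_collisions (hun _ _ (hun _ _ p13 p23) (hun _ _ p33 p43))
        (hmono _ _ _ ?_ p12) (hmono _ _ _ ?_ p22) (hmono _ _ _ ?_ p32) (hmono _ _ _ ?_ p42)
        hne h11 h12 h21 h22 e₁ e₂ <;>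
      · intro z hz
        simp [hz]

end Forest

theorem stmt14 (d : ℕ) (hd : 2 ≤ d) :
    haveI : NeZero d := ⟨by omega⟩
    ∃ β : ℝ, ∀ (α : Type) [DecidableEq α],
      ∀ (X : Finset α) (g : ℕ) (h : Fin d → α → Fin g) (L : List α),
        L.Nodup → (∀ x, x ∈ L ↔ x ∈ X) →
        ∀ σ : α → Fin d, alwaysGoLeftPlacement h L σ →
        ∀ (k : ℕ) (i : Fin d), 1 ≤ k →
        (∃ v : Fin g, k + 1 ≤ loadAt h σ L (v, i)) →
        containsCopy (SEdges d k i) X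
            (fun x => Finset.univ.image fun j : Fin d => (h j x, j)) ∨
          ∃ S ⊆ X, (S.card : ℝ) ≤ β * k ∧
            (S.biUnion fun x => Finset.univ.image fun j : Fin d => (h j x, j)).card + 1 ≤
              (d - 1) * S.card := by
  have : NeZero d := ⟨by omega⟩
  -- four chains, each with at most `d * (k + 2) ≤ 3 * d * k` keys
  refine ⟨12 * d, ?_⟩
  intro α _ X g h L hL hLX σ hσ k i hk ⟨v, hv⟩
  have hkey : ∀ m, 1 ≤ m → m ≤ k + 1 →
      ∃ y, y ∈ X ∧ σ y = i ∧ h i y = v ∧ height h σ L y = m := by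
    intro m hm hm'
    obtain ⟨y, hyL, hyB, hyt⟩ := exists_key_of_le_load h σ L hL L.length le_rfl (v, i) m hm
      (by rw [List.take_length]; omega)
    simp only [Prod.mk.injEq] at hyB
    obtain ⟨h1, h2⟩ := hyB
    rw [h2] at h1
    exact ⟨y, (hLX y).1 hyL, h2, h1, hyt⟩
  obtain ⟨y₀, -⟩ := hkey 1 le_rfl (by omega)
  have : Nonempty α := ⟨y₀⟩
  choose! y hy using hkey
  rcases copy_or_dense (h := h) (σ := σ) (ht := height h σ L) (X := X)
    (by
      intro x hx j l hl hlt
      obtain ⟨z, hz, h1, h2, h3⟩ :=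
        exists_key_below h σ L hL hσ x ((hLX x).2 hx) j l hl hlt
      exact ⟨z, (hLX z).1 hz, h1, h2, h3⟩) k i hk v y hy with hcopy | ⟨S, hS, hcard, hdense⟩
  · exact Or.inl hcopy
  · exact Or.inr ⟨S, hS, by exact_mod_cast hcard, hdense⟩
end

section
/- Let d ≥ 2, ℓ ≥ 1, 1 ≤ i ≤ d and k ≥ ℓ. In the ℓ-pruned d-ary Fibonacci tree P_{i,ℓ}(k), the number of vertices w that are contained in at least ℓ edges joining w to children of w all of which are leaves equals exactly F_d(d(k−ℓ)+i), where F_d denotes the d-ary Fibonacci numbers. -/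
/-!
Every vertex of `S_i(k)` is the root of a maximal copy of some `S_c(m)` hanging below it; call
`(c, m)` its type: `c` is its letter (`FibTree.lt`, with letters numbered from `0`) and `m` is the
number of edges joining it to its children (`FibTree.dg`). The `t`-th of these `m` edges
(`FibTree.ed`) was created as the top edge of `S_c(t)`, so its lower vertices have types `(j, t)`
for `j < c` and `(j, t - 1)` for `j > c` (`child_type`, `exists_child`).

Hence `m` never increases towards descendants, and pruning keeps exactly the edges whose upper
vertex has `m ≥ ℓ` (`mem_pruned`); a vertex is a leaf of the pruned tree exactly when `m < ℓ`
(`isLeafIn_iff`). The `t`-th child edge of a vertex of type `(c, m)`, `m ≥ ℓ`, therefore leads to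
leaves only iff `t ≤ ℓ` when `c = 0`, and iff `t < ℓ` when `c > 0`. So the vertices to be counted
are those of type `(0, m)` with `m ≥ ℓ` (`good_iff`).

Decomposing `S_i(k+1)` into its `d` pieces, the types of all vertices are unchanged except that the
root passes from `(i, k)` to `(i, k + 1)`. This gives the recursion of `exists_good_set`, which is
the `d`-ary Fibonacci recursion (`cnt_succ`): the pieces `j < i` and `j ≥ i` account for the `d`
indices preceding `d (k + 1 - ℓ) + i + 1`.
-/

open scoped Classical

/-- The set of children of the vertex (address) `v` in the rooted tree `S_i(k)`. -/
def SChildren (d : ℕ) [NeZero d] :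
    (k : ℕ) → (i : Fin d) → List (Fin d) → Finset (List (Fin d))
  | 0, _, _ => ∅
  | (k + 1), i, v =>
      (match v with
        | [] => (∅ : Finset (List (Fin d)))
        | j :: u =>
          if _h : j < i then (SChildren d (k + 1) j u).image (List.cons j)
          else (SChildren d k j u).image (List.cons j)) ∪
      (if v = List.replicate (k + 1) i then
        (Finset.univ.image fun j : Fin d =>
          if j < i then j :: List.replicate (k + 1) j else j :: List.replicate k j) \ {v}
      else ∅)
  termination_by k i => (k, (i : ℕ))

/-- The edges of the `ℓ`-pruned tree `P_{i,ℓ}(k)`: the edges of `S_i(k)` that do not lie in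
the induced subtree (descendants w.r.t. the child relation) rooted at a vertex of `S_i(k)`
with fewer than `(d-1)ℓ` children. -/
noncomputable def prunedSEdges (d : ℕ) [NeZero d] (k : ℕ) (i : Fin d) (ℓ : ℕ) :
    Finset (Finset (List (Fin d))) :=
  (SEdges d k i).filter fun e =>
    ¬ ∃ w ∈ (SEdges d k i).biUnion id, (SChildren d k i w).card < (d - 1) * ℓ ∧
      ∀ v ∈ e, Relation.ReflTransGen (fun a b => b ∈ SChildren d k i a) w v

/-- d-ary Fibonacci numbers: `dFib d k = F_d(k)`, with `F_d(j) = 0` for `j ≤ 0`. -/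
def dFib (d : ℕ) : ℕ → ℕ
  | 0 => 0
  | 1 => 1
  | (k + 2) => ∑ j ∈ Finset.range d, dFib d (k + 1 - j)
  termination_by k => k
  decreasing_by omega


/-- `u` is a leaf of the pruned tree `P` (with child relation `child`):
it belongs to no edge of `P` together with one of its children. -/
def IsLeafIn {V : Type*} [DecidableEq V] (P : Finset (Finset V))
    (child : V → Finset V) (u : V) : Prop :=
  ¬ ∃ e ∈ P, u ∈ e ∧ ∃ z ∈ e, z ∈ child u

namespace FibTree

variable {d : ℕ}

/-! ### Recursive structure of the Fibonacci tree -/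

/-- In the decomposition of `S_i(k+1)` along its top edge, the `j`-th piece is
a copy of `S_j(nx k i j)`. -/
def nx (k : ℕ) (i j : Fin d) : ℕ := if j < i then k + 1 else k

/-- The top edge of `S_i(k+1)`, consisting of the roots of all its pieces. -/
def top (k : ℕ) (i : Fin d) : Finset (List (Fin d)) :=
  Finset.univ.image fun j : Fin d => j :: List.replicate (nx k i j) j

/-- The number of edges of `S_i(k)` joining the vertex with address `v` to its children
(`0` if `v` is not the address of a vertex). -/
def dg : List (Fin d) → ℕ → Fin d → ℕ
  | [], _, _ => 0
  | _ :: _, 0, _ => 0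
  | j :: u, k + 1, i =>
      if j :: u = List.replicate (k + 1) i then k + 1 else dg u (nx k i j) j

/-- The `t`-th edge joining `v` to its children in `S_i(k)`, meaningful for
`1 ≤ t ≤ dg v k i`; the last one is added at the outermost level of the recursion. -/
def ed : List (Fin d) → ℕ → Fin d → ℕ → Finset (List (Fin d))
  | [], _, _, _ => ∅
  | _ :: _, 0, _, _ => ∅
  | j :: u, k + 1, i, t =>
      if j :: u = List.replicate (k + 1) i ∧ t = k + 1 then top k i
      else (ed u (nx k i j) j t).image (List.cons j)

/-- The letter `c` such that the vertex with address `v` is the root of a copy of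
some `S_c(m)`; the default `i` covers the single vertex of `S_i(0)`. -/
def lt (v : List (Fin d)) (i : Fin d) : Fin d := v.getLastD i

lemma lt_cons (j : Fin d) (u : List (Fin d)) (i : Fin d) : lt (j :: u) i = lt u j := by
  cases u <;> rfl

lemma lt_replicate (k : ℕ) (i : Fin d) : lt (List.replicate k i) i = i := by
  induction k with
  | zero => rfl
  | succ k ih => rw [List.replicate_succ, lt_cons, ih]

lemma nx_self (k : ℕ) (i : Fin d) : nx k i i = k := by simp [nx]

/-- Induction along the decomposition of `S_i(k+1)` into its pieces. -/
lemma ind {P : ℕ → Fin d → Prop} (h0 : ∀ i, P 0 i)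
    (hs : ∀ k i, (∀ j, P (nx k i j) j) → P (k + 1) i) : ∀ k i, P k i := by
  intro k
  induction k with
  | zero => exact h0
  | succ k ih =>
    intro i
    induction i using WellFoundedLT.induction with
    | ind i ihi =>
      refine hs k i fun j => ?_
      by_cases h : j < i
      · simpa [nx, h] using ihi j h
      · simpa [nx, h] using ih j

lemma SEdges_succ [NeZero d] (k : ℕ) (i : Fin d) :
    SEdges d (k + 1) i = insert (top k i)
      (Finset.univ.biUnion fun j : Fin d =>
        (SEdges d (nx k i j) j).image fun e => e.image (List.cons j)) := by
  rw [SEdges]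
  congr 1
  · unfold top nx
    congr 1
    ext1 j
    split_ifs <;> rfl
  · congr 1
    ext1 j
    by_cases h : j < i <;> simp [h, nx]

lemma SChildren_zero [NeZero d] (i : Fin d) (v : List (Fin d)) : SChildren d 0 i v = ∅ := by
  rw [SChildren]

lemma SChildren_nil [NeZero d] (k : ℕ) (i : Fin d) : SChildren d k i [] = ∅ := by
  cases k <;> rw [SChildren]
  simp

lemma SChildren_cons [NeZero d] (k : ℕ) (i j : Fin d) (u : List (Fin d)) :
    SChildren d (k + 1) i (j :: u) = (SChildren d (nx k i j) j u).image (List.cons j) ∪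
      (if j :: u = List.replicate (k + 1) i then top k i \ {j :: u} else ∅) := by
  rw [SChildren]
  congr 1
  · by_cases h : j < i <;> simp [h, nx]
  · unfold top nx
    split_ifs
    · congr 2
      ext1 j
      split_ifs <;> rfl
    · rfl

lemma dg_replicate (k : ℕ) (i : Fin d) : dg (List.replicate k i) k i = k := by
  cases k with
  | zero => rfl
  | succ k => simp [List.replicate_succ, dg]

lemma dg_zero (v : List (Fin d)) (i : Fin d) : dg v 0 i = 0 := by
  cases v <;> rfl

lemma root_mem_top (k : ℕ) (i : Fin d) : List.replicate (k + 1) i ∈ top k i := by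
  simp only [top, Finset.mem_image, Finset.mem_univ, true_and]
  exact ⟨i, by rw [nx_self, List.replicate_succ]⟩

lemma mem_top {k : ℕ} {i j : Fin d} {u : List (Fin d)} :
    j :: u ∈ top k i ↔ u = List.replicate (nx k i j) j := by
  simp only [top, Finset.mem_image, Finset.mem_univ, true_and, List.cons.injEq]
  constructor
  · rintro ⟨a, rfl, h⟩
    exact h.symm
  · rintro rfl
    exact ⟨j, rfl, rfl⟩

lemma cons_eq_root {k : ℕ} {i j : Fin d} {u : List (Fin d)} :
    j :: u = List.replicate (k + 1) i ↔ j = i ∧ u = List.replicate k i := by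
  simp [List.replicate_succ]

/-! ### Indexing the edges by upper vertex and position -/

lemma ed_of_le {k : ℕ} {i j : Fin d} {u : List (Fin d)} {t : ℕ}
    (h : t ≤ dg u (nx k i j) j) :
    t ≤ dg (j :: u) (k + 1) i ∧
      ed (j :: u) (k + 1) i t = (ed u (nx k i j) j t).image (List.cons j) := by
  by_cases hr : j :: u = List.replicate (k + 1) i
  · obtain ⟨rfl, rfl⟩ := cons_eq_root.1 hr
    rw [nx_self, dg_replicate] at h
    simp only [dg, ed, hr, true_and, if_true]
    refine ⟨by omega, ?_⟩
    rw [if_neg (by omega)]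
  · simp only [dg, ed, hr, false_and, if_false]
    exact ⟨h, trivial⟩

lemma valid_cases {k : ℕ} {i j : Fin d} {u : List (Fin d)} {t : ℕ}
    (h : t ≤ dg (j :: u) (k + 1) i) :
    t ≤ dg u (nx k i j) j ∨
      (j :: u = List.replicate (k + 1) i ∧ t = k + 1 ∧ ed (j :: u) (k + 1) i t = top k i) := by
  by_cases hr : j :: u = List.replicate (k + 1) i
  · by_cases ht : t = k + 1
    · right
      exact ⟨hr, ht, by simp [ed, hr, ht]⟩
    · left
      simp only [dg, hr, if_true] at h
      obtain ⟨rfl, rfl⟩ := cons_eq_root.1 hr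
      rw [nx_self, dg_replicate]
      omega
  · left
    simpa only [dg, hr, if_false] using h

lemma dg_root (k : ℕ) (i j : Fin d) (u : List (Fin d))
    (h : j :: u = List.replicate (k + 1) i) :
    dg (j :: u) (k + 1) i = k + 1 ∧ ed (j :: u) (k + 1) i (k + 1) = top k i := by
  simp [dg, ed, h]

lemma self_mem_ed {v : List (Fin d)} {k : ℕ} {i : Fin d} {t : ℕ} (h1 : 1 ≤ t)
    (h2 : t ≤ dg v k i) : v ∈ ed v k i t := by
  induction v generalizing k i with
  | nil => simp [dg] at h2; omega
  | cons j u ih =>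
    cases k with
    | zero => simp [dg] at h2; omega
    | succ k =>
      rcases valid_cases h2 with h | ⟨hr, -, he⟩
      · rw [(ed_of_le h).2]
        exact Finset.mem_image_of_mem _ (ih h)
      · rw [he, hr]
        exact root_mem_top k i

lemma mem_SEdges [NeZero d] {k : ℕ} {i : Fin d} {e : Finset (List (Fin d))} :
    e ∈ SEdges d k i ↔ ∃ v t, 1 ≤ t ∧ t ≤ dg v k i ∧ e = ed v k i t := by
  revert e
  refine ind (P := fun k i => ∀ {e : Finset (List (Fin d))}, e ∈ SEdges d k i ↔
    ∃ v t, 1 ≤ t ∧ t ≤ dg v k i ∧ e = ed v k i t) ?_ ?_ k i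
  · intro i e
    rw [SEdges]
    simp only [Finset.notMem_empty, false_iff]
    rintro ⟨v, t, h1, h2, -⟩
    rw [dg_zero] at h2
    omega
  · intro k i ih e
    rw [SEdges_succ]
    simp only [Finset.mem_insert, Finset.mem_biUnion, Finset.mem_univ, true_and,
      Finset.mem_image, ih]
    constructor
    · rintro (rfl | ⟨j, e, ⟨v, t, h1, h2, rfl⟩, rfl⟩)
      · obtain ⟨h, h'⟩ := dg_root k i i (List.replicate k i) rfl
        exact ⟨_, k + 1, by omega, h.ge, h'.symm⟩
      · exact ⟨j :: v, t, h1, (ed_of_le h2).1, (ed_of_le h2).2.symm⟩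
    · rintro ⟨v, t, h1, h2, rfl⟩
      cases v with
      | nil => simp [dg] at h2; omega
      | cons j u =>
        rcases valid_cases h2 with h | ⟨-, -, he⟩
        · exact Or.inr ⟨j, _, ⟨u, t, h1, h, rfl⟩, (ed_of_le h).2.symm⟩
        · exact Or.inl he

lemma mem_SChildren [NeZero d] {k : ℕ} {i : Fin d} {v u : List (Fin d)} :
    u ∈ SChildren d k i v ↔ ∃ t, 1 ≤ t ∧ t ≤ dg v k i ∧ u ∈ ed v k i t ∧ u ≠ v := by
  induction v generalizing k i u with
  | nil =>
    rw [SChildren_nil]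
    simp only [Finset.notMem_empty, false_iff, dg]
    rintro ⟨t, h1, h2, -⟩
    omega
  | cons j w ih =>
    cases k with
    | zero =>
      rw [SChildren_zero]
      simp only [Finset.notMem_empty, false_iff, dg]
      rintro ⟨t, h1, h2, -⟩
      omega
    | succ k =>
      rw [SChildren_cons, Finset.mem_union, Finset.mem_image]
      constructor
      · rintro (⟨u', hu', rfl⟩ | h)
        · obtain ⟨t, h1, h2, h3, h4⟩ := ih.1 hu'
          refine ⟨t, h1, (ed_of_le h2).1, ?_, by simpa using h4⟩
          rw [(ed_of_le h2).2]
          exact Finset.mem_image_of_mem _ h3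
        · split_ifs at h with hr
          · obtain ⟨h3, h4⟩ := dg_root k i j w hr
            rw [Finset.mem_sdiff, Finset.mem_singleton] at h
            exact ⟨k + 1, by omega, h3.ge, by rw [h4]; exact h.1, h.2⟩
          · simp at h
      · rintro ⟨t, h1, h2, h3, h4⟩
        rcases valid_cases h2 with h | ⟨hr, -, he⟩
        · rw [(ed_of_le h).2, Finset.mem_image] at h3
          obtain ⟨u', hu', rfl⟩ := h3
          exact Or.inl ⟨u', ih.2 ⟨t, h1, h, hu', by simpa using h4⟩, rfl⟩
        · right
          rw [if_pos hr, Finset.mem_sdiff, Finset.mem_singleton, ← he]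
          exact ⟨h3, h4⟩

/-! ### Parents and types of children -/

/-- The root has no parent. -/
lemma root_notMem [NeZero d] (k : ℕ) (i : Fin d) (v : List (Fin d)) :
    List.replicate k i ∉ SChildren d k i v := by
  induction k generalizing v with
  | zero => simp [SChildren_zero]
  | succ k ih =>
    cases v with
    | nil => simp [SChildren_nil]
    | cons j w =>
      rw [SChildren_cons, Finset.mem_union, Finset.mem_image]
      rintro (⟨u, hu, h⟩ | h)
      · obtain ⟨rfl, rfl⟩ := cons_eq_root.1 h
        rw [nx_self] at hu
        exact ih _ hu
      · split_ifs at h with hr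
        · rw [hr] at h
          simp at h
        · simp at h

lemma parent_unique [NeZero d] {k : ℕ} {i : Fin d} {u v v' : List (Fin d)}
    (h : u ∈ SChildren d k i v) (h' : u ∈ SChildren d k i v') : v = v' := by
  induction v generalizing k i u v' with
  | nil => simp [SChildren_nil] at h
  | cons j w ih =>
    cases k with
    | zero => simp [SChildren_zero] at h
    | succ k =>
      cases v' with
      | nil => simp [SChildren_nil] at h'
      | cons j' w' =>
        rw [SChildren_cons, Finset.mem_union, Finset.mem_image] at h h'
        rcases h with ⟨x, hx, rfl⟩ | h
        · rcases h' with ⟨y, hy, hxy⟩ | h'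
          · simp only [List.cons.injEq] at hxy
            obtain ⟨rfl, rfl⟩ := hxy
            rw [ih hx hy]
          · split_ifs at h' with hr
            · rw [Finset.mem_sdiff, mem_top] at h'
              rw [h'.1] at hx
              exact absurd hx (root_notMem _ _ _)
            · simp at h'
        · split_ifs at h with hr
          · rcases h' with ⟨y, hy, rfl⟩ | h'
            · rw [Finset.mem_sdiff, mem_top] at h
              rw [h.1] at hy
              exact absurd hy (root_notMem _ _ _)
            · split_ifs at h' with hr'
              · rw [hr, hr']
              · simp at h'
          · simp at h

/-- The types of the children of `v` along its `t`-th edge: those with a smaller letter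
have `t` child edges of their own, those with a larger letter have `t - 1`. -/
lemma child_type [NeZero d] {v u : List (Fin d)} {k : ℕ} {i : Fin d} {t : ℕ} (h1 : 1 ≤ t)
    (h2 : t ≤ dg v k i) (hu : u ∈ ed v k i t) (huv : u ≠ v) :
    (lt u i < lt v i ∧ dg u k i = t) ∨ (lt v i < lt u i ∧ dg u k i + 1 = t) := by
  induction v generalizing k i u with
  | nil => simp [dg] at h2; omega
  | cons j w ih =>
    cases k with
    | zero => simp [dg] at h2; omega
    | succ k =>
      rcases valid_cases h2 with h | ⟨hr, rfl, he⟩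
      · rw [(ed_of_le h).2, Finset.mem_image] at hu
        obtain ⟨x, hx, rfl⟩ := hu
        have hxw : x ≠ w := by simpa using huv
        have hc : x ∈ SChildren d (nx k i j) j w := mem_SChildren.2 ⟨t, h1, h, hx, hxw⟩
        have hnr : j :: x ≠ List.replicate (k + 1) i := by
          intro hr
          obtain ⟨rfl, rfl⟩ := cons_eq_root.1 hr
          rw [nx_self] at hc
          exact root_notMem _ _ _ hc
        simp only [lt_cons, dg, if_neg hnr]
        exact ih h hx hxw
      · rw [he] at hu
        cases u with
        | nil => simp [top] at hu
        | cons a x =>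
          rw [mem_top] at hu
          subst hu
          have hai : a ≠ i := by
            rintro rfl
            rw [hr, nx_self, List.replicate_succ] at huv
            exact huv rfl
          have hnr : a :: List.replicate (nx k i a) a ≠ List.replicate (k + 1) i :=
            fun h => hai (cons_eq_root.1 h).1
          rw [hr, lt_replicate, lt_cons, lt_replicate]
          simp only [dg, if_neg hnr, dg_replicate]
          rcases lt_or_gt_of_ne hai with h | h
          · left; simp [nx, h]
          · right; simp [nx, h, not_lt.2 h.le]

/-- Along each edge from `v` to its children, every letter other than that of `v` occurs. -/
lemma exists_child {v : List (Fin d)} {k : ℕ} {i : Fin d} {t : ℕ} (h1 : 1 ≤ t)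
    (h2 : t ≤ dg v k i) (a : Fin d) (ha : a ≠ lt v i) :
    ∃ u ∈ ed v k i t, u ≠ v ∧ lt u i = a := by
  induction v generalizing k i with
  | nil => simp [dg] at h2; omega
  | cons j w ih =>
    cases k with
    | zero => simp [dg] at h2; omega
    | succ k =>
      rcases valid_cases h2 with h | ⟨hr, rfl, he⟩
      · rw [(ed_of_le h).2]
        rw [lt_cons] at ha
        obtain ⟨u, hu, huv, hl⟩ := ih h ha
        exact ⟨j :: u, Finset.mem_image_of_mem _ hu, by simpa using huv, by rwa [lt_cons]⟩
      · rw [hr, lt_replicate] at ha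
        refine ⟨a :: List.replicate (nx k i a) a, ?_, ?_, ?_⟩
        · rw [he, mem_top]
        · rw [hr]
          exact fun h => ha (cons_eq_root.1 h).1
        · rw [lt_cons, lt_replicate]

lemma card_top (k : ℕ) (i : Fin d) : (top k i).card = d := by
  rw [top, Finset.card_image_of_injective, Finset.card_univ, Fintype.card_fin]
  intro a b h
  simp only [List.cons.injEq] at h
  exact h.1

lemma card_SChildren [NeZero d] (v : List (Fin d)) (k : ℕ) (i : Fin d) :
    (SChildren d k i v).card = (d - 1) * dg v k i := by
  induction v generalizing k i with
  | nil => simp [SChildren_nil, dg]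
  | cons j w ih =>
    cases k with
    | zero => simp [SChildren_zero, dg]
    | succ k =>
      have hinj : Function.Injective (List.cons j) := List.cons_injective
      rw [SChildren_cons]
      by_cases hr : j :: w = List.replicate (k + 1) i
      · rw [if_pos hr, Finset.card_union_of_disjoint, Finset.card_image_of_injective _ hinj, ih,
          Finset.card_sdiff_of_subset, card_top, (dg_root k i j w hr).1, Finset.card_singleton]
        · obtain ⟨rfl, rfl⟩ := cons_eq_root.1 hr
          rw [nx_self, dg_replicate]
          ring
        · rw [Finset.singleton_subset_iff, hr]
          exact root_mem_top k i
        · rw [Finset.disjoint_left]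
          intro x hx hx'
          obtain ⟨y, hy, rfl⟩ := Finset.mem_image.1 hx
          rw [Finset.mem_sdiff, mem_top] at hx'
          rw [hx'.1] at hy
          exact root_notMem _ _ _ hy
      · rw [if_neg hr, Finset.union_empty, Finset.card_image_of_injective _ hinj, ih]
        simp only [dg, if_neg hr]

lemma child_lt [NeZero d] {k : ℕ} {i : Fin d} {v u : List (Fin d)}
    (h : u ∈ SChildren d k i v) :
    (lt u i < lt v i ∧ dg u k i ≤ dg v k i) ∨ dg u k i < dg v k i := by
  obtain ⟨t, h1, h2, h3, h4⟩ := mem_SChildren.1 h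
  rcases child_type h1 h2 h3 h4 with ⟨h, h'⟩ | ⟨h, h'⟩
  · left; exact ⟨h, by omega⟩
  · right; omega

lemma child_asymm [NeZero d] {k : ℕ} {i : Fin d} {v u : List (Fin d)}
    (h : u ∈ SChildren d k i v) : v ∉ SChildren d k i u := by
  intro h'
  have := child_lt h
  have := child_lt h'
  omega

lemma dg_le_of_desc [NeZero d] {k : ℕ} {i : Fin d} {w v : List (Fin d)}
    (h : Relation.ReflTransGen (fun a b => b ∈ SChildren d k i a) w v) :
    dg v k i ≤ dg w k i := by
  induction h with
  | refl => exact le_rfl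
  | tail _ hbc ih => rcases child_lt hbc with h | h <;> omega

/-! ### The pruned tree and its leaves -/

/-- Since the number of child edges never increases along descendants, pruning keeps exactly the
edges whose upper vertex has at least `ℓ` child edges. -/
lemma mem_pruned [NeZero d] (hd : 2 ≤ d) {k : ℕ} {i : Fin d} {ℓ : ℕ}
    {e : Finset (List (Fin d))} :
    e ∈ prunedSEdges d k i ℓ ↔
      ∃ v t, 1 ≤ t ∧ t ≤ dg v k i ∧ ℓ ≤ dg v k i ∧ e = ed v k i t := by
  have hd' : 0 < d - 1 := by omega
  rw [prunedSEdges, Finset.mem_filter, mem_SEdges]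
  constructor
  · rintro ⟨⟨v, t, h1, h2, rfl⟩, hn⟩
    refine ⟨v, t, h1, h2, ?_, rfl⟩
    by_contra! hlt
    refine hn ⟨v, ?_, ?_, ?_⟩
    · rw [Finset.mem_biUnion]
      exact ⟨_, mem_SEdges.2 ⟨v, t, h1, h2, rfl⟩, self_mem_ed h1 h2⟩
    · rw [card_SChildren]
      exact Nat.mul_lt_mul_of_pos_left hlt hd'
    · intro u hu
      by_cases huv : u = v
      · rw [huv]
      · exact Relation.ReflTransGen.single (mem_SChildren.2 ⟨t, h1, h2, hu, huv⟩)
  · rintro ⟨v, t, h1, h2, h3, rfl⟩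
    refine ⟨⟨v, t, h1, h2, rfl⟩, ?_⟩
    rintro ⟨w, -, hw, hall⟩
    rw [card_SChildren] at hw
    have := Nat.lt_of_mul_lt_mul_left hw
    have := dg_le_of_desc (hall v (self_mem_ed h1 h2))
    omega

lemma exists_ne_letter (hd : 2 ≤ d) (c : Fin d) : ∃ a : Fin d, a ≠ c := by
  have : Nontrivial (Fin d) := Fin.nontrivial_iff_two_le.2 hd
  exact exists_ne c

lemma isLeafIn_iff [NeZero d] (hd : 2 ≤ d) {k : ℕ} {i : Fin d} {ℓ : ℕ} (hℓ : 1 ≤ ℓ)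
    {u : List (Fin d)} :
    IsLeafIn (prunedSEdges d k i ℓ) (SChildren d k i) u ↔ dg u k i < ℓ := by
  unfold IsLeafIn
  constructor
  · intro hn
    by_contra! hge
    have h1 : 1 ≤ dg u k i := hℓ.trans hge
    obtain ⟨a, ha⟩ := exists_ne_letter hd (lt u i)
    obtain ⟨z, hz, hzu, -⟩ := exists_child le_rfl h1 a ha
    exact hn ⟨_, (mem_pruned hd).2 ⟨u, 1, le_rfl, h1, hge, rfl⟩, self_mem_ed le_rfl h1, z, hz,
      mem_SChildren.2 ⟨1, le_rfl, h1, hz, hzu⟩⟩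
  · rintro hlt ⟨e, he, hu, z, hz, hzu⟩
    obtain ⟨v, t, h1, h2, h3, rfl⟩ := (mem_pruned hd).1 he
    have huv : u ≠ v := by rintro rfl; omega
    have hc : u ∈ SChildren d k i v := mem_SChildren.2 ⟨t, h1, h2, hu, huv⟩
    by_cases hzv : z = v
    · rw [hzv] at hzu
      exact child_asymm hc hzu
    · exact huv (parent_unique hzu (mem_SChildren.2 ⟨t, h1, h2, hz, hzv⟩))

lemma ed_injOn [NeZero d] (hd : 2 ≤ d) {k : ℕ} {i : Fin d} {v : List (Fin d)} {t t' : ℕ}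
    (h1 : 1 ≤ t) (h2 : t ≤ dg v k i) (h1' : 1 ≤ t') (h2' : t' ≤ dg v k i)
    (h : ed v k i t = ed v k i t') : t = t' := by
  obtain ⟨a, ha⟩ := exists_ne_letter hd (lt v i)
  obtain ⟨z, hz, hzv, -⟩ := exists_child h1 h2 a ha
  have := child_type h1 h2 hz hzv
  rw [h] at hz
  have := child_type h1' h2' hz hzv
  omega

/-- If `w` has at least `ℓ` child edges (otherwise it has none left after pruning), the edges
joining it to children that are leaves of the pruned tree are the `t`-th edges
with `t ≤ ℓ` if `w` has the smallest letter, and those with `t ≤ ℓ - 1` otherwise. -/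
lemma leaf_edge_iff [NeZero d] (hd : 2 ≤ d) {k : ℕ} {i : Fin d} {ℓ : ℕ} (hℓ : 1 ≤ ℓ)
    {w : List (Fin d)} {e : Finset (List (Fin d))} :
    (e ∈ prunedSEdges d k i ℓ ∧ w ∈ e ∧ ∀ u ∈ e, u ≠ w → u ∈ SChildren d k i w ∧
      IsLeafIn (prunedSEdges d k i ℓ) (SChildren d k i) u) ↔
    ∃ t, 1 ≤ t ∧ t ≤ dg w k i ∧ ℓ ≤ dg w k i ∧
      (if (lt w i : ℕ) = 0 then t ≤ ℓ else t < ℓ) ∧ e = ed w k i t := by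
  simp only [isLeafIn_iff hd hℓ]
  constructor
  · rintro ⟨he, hw, hall⟩
    obtain ⟨v, t, h1, h2, h3, rfl⟩ := (mem_pruned hd).1 he
    have hvw : v = w := by
      by_contra hne
      exact child_asymm (hall v (self_mem_ed h1 h2) hne).1
        (mem_SChildren.2 ⟨t, h1, h2, hw, fun h => hne h.symm⟩)
    subst hvw
    refine ⟨t, h1, h2, h3, ?_, rfl⟩
    split_ifs with h0
    · obtain ⟨a, ha⟩ := exists_ne_letter hd (lt v i)
      obtain ⟨z, hz, hzv, -⟩ := exists_child h1 h2 a ha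
      have := child_type h1 h2 hz hzv
      have := (hall z hz hzv).2
      omega
    · obtain ⟨z, hz, hzv, hl⟩ := exists_child h1 h2 ⟨0, by omega⟩
        (fun h => h0 (by rw [← h]))
      have hl' : (lt z i : ℕ) = 0 := by rw [hl]
      have := child_type h1 h2 hz hzv
      have := (hall z hz hzv).2
      omega
  · rintro ⟨t, h1, h2, h3, h4, rfl⟩
    refine ⟨(mem_pruned hd).2 ⟨w, t, h1, h2, h3, rfl⟩, self_mem_ed h1 h2, fun u hu huw => ?_⟩
    refine ⟨mem_SChildren.2 ⟨t, h1, h2, hu, huw⟩, ?_⟩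
    have := child_type h1 h2 hu huw
    split_ifs at h4 <;> omega

/-- The vertices to be counted are those with the smallest letter and at least `ℓ` child
edges. -/
lemma good_iff [NeZero d] (hd : 2 ≤ d) {k : ℕ} {i : Fin d} {ℓ : ℕ} (hℓ : 1 ≤ ℓ)
    {w : List (Fin d)} :
    ℓ ≤ (Finset.filter
            (fun e => w ∈ e ∧ ∀ u ∈ e, u ≠ w →
              u ∈ SChildren d k i w ∧
                IsLeafIn (prunedSEdges d k i ℓ) (SChildren d k i) u)
            (prunedSEdges d k i ℓ)).card ↔
      ℓ ≤ dg w k i ∧ (lt w i : ℕ) = 0 := by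
  set A := Finset.filter
    (fun e => w ∈ e ∧ ∀ u ∈ e, u ≠ w → u ∈ SChildren d k i w ∧
      IsLeafIn (prunedSEdges d k i ℓ) (SChildren d k i) u) (prunedSEdges d k i ℓ) with hA
  have hmem : ∀ e, e ∈ A ↔ ∃ t, 1 ≤ t ∧ t ≤ dg w k i ∧ ℓ ≤ dg w k i ∧
      (if (lt w i : ℕ) = 0 then t ≤ ℓ else t < ℓ) ∧ e = ed w k i t := by
    intro e
    rw [hA, Finset.mem_filter]
    exact leaf_edge_iff hd hℓ
  constructor
  · intro hcard
    obtain ⟨e, he⟩ : A.Nonempty := Finset.card_pos.1 (by omega)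
    obtain ⟨-, -, -, h3, -, -⟩ := (hmem e).1 he
    refine ⟨h3, ?_⟩
    by_contra h0
    have hsub : A ⊆ (Finset.Ico 1 ℓ).image (ed w k i) := by
      intro e he
      obtain ⟨t, h1, -, -, h4, rfl⟩ := (hmem e).1 he
      rw [if_neg h0] at h4
      exact Finset.mem_image_of_mem _ (Finset.mem_Ico.2 ⟨h1, h4⟩)
    have := (Finset.card_le_card hsub).trans Finset.card_image_le
    rw [Nat.card_Ico] at this
    omega
  · rintro ⟨h3, h0⟩
    have hsub : (Finset.Icc 1 ℓ).image (ed w k i) ⊆ A := by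
      intro e he
      obtain ⟨t, ht, rfl⟩ := Finset.mem_image.1 he
      rw [Finset.mem_Icc] at ht
      exact (hmem _).2 ⟨t, ht.1, by omega, h3, by rw [if_pos h0]; exact ht.2, rfl⟩
    have := Finset.card_le_card hsub
    rw [Finset.card_image_of_injOn, Nat.card_Icc] at this
    · omega
    · intro t ht t' ht' h
      simp only [Finset.coe_Icc, Set.mem_Icc] at ht ht'
      exact ed_injOn hd ht.1 (by omega) ht'.1 (by omega) h

/-! ### Counting -/

lemma sum_window (h : ℕ → ℕ) (i : ℕ) (hi : i ≤ d) :
    ∑ j : Fin d, h (if (j : ℕ) < i then d + j else j) = ∑ r ∈ Finset.range d, h (i + r) := by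
  rw [Fin.sum_univ_eq_sum_range (fun j => h (if j < i then d + j else j)) d]
  obtain ⟨m, rfl⟩ := Nat.exists_eq_add_of_le hi
  rw [Finset.sum_range_add]
  conv_rhs => rw [add_comm i m, Finset.sum_range_add]
  rw [add_comm]
  congr 1
  · refine Finset.sum_congr rfl fun j _ => ?_
    rw [if_neg (by omega)]
  · refine Finset.sum_congr rfl fun j hj => ?_
    rw [if_pos (Finset.mem_range.1 hj)]
    congr 1
    ring

/-- The value of the count for `S_i(k)`, for arbitrary `k`. -/
def cnt (ℓ k : ℕ) (i : Fin d) : ℕ := if k < ℓ then 0 else dFib d (d * (k - ℓ) + i + 1)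

lemma cnt_succ (ℓ k : ℕ) (i : Fin d) :
    cnt ℓ (k + 1) i =
      ∑ j, cnt ℓ (nx k i j) j + if k + 1 = ℓ ∧ (i : ℕ) = 0 then 1 else 0 := by
  by_cases hk : k + 1 < ℓ
  · rw [if_neg (by omega), Finset.sum_eq_zero]
    · simp [cnt, hk]
    · intro j _
      unfold cnt nx
      split_ifs <;> first | rfl | omega
  · set m := k + 1 - ℓ with hm
    -- truncated subtraction: the terms with `m = 0` and `x < d` vanish, as `F_d(j) = 0` for `j ≤ 0`
    have hterm : ∀ j : Fin d, cnt ℓ (nx k i j) j =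
        dFib d (d * m + (if (j : ℕ) < i then d + j else j) + 1 - d) := by
      intro j
      have hj := j.isLt
      unfold cnt nx
      by_cases hji : j < i
      · have hji' : (j : ℕ) < i := hji
        rw [if_pos hji, if_pos hji', if_neg hk]
        congr 1
        rw [← hm]
        omega
      · have hji' : ¬ (j : ℕ) < i := hji
        rw [if_neg hji, if_neg hji']
        by_cases hkl : k < ℓ
        · have : m = 0 := by omega
          rw [if_pos hkl, this]
          have : d * 0 + (j : ℕ) + 1 - d = 0 := by omega
          rw [this, dFib]
        · rw [if_neg hkl]
          congr 1
          have : m = (k - ℓ) + 1 := by omega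
          rw [this, Nat.mul_add]
          omega
    have hsum : ∑ j, cnt ℓ (nx k i j) j =
        ∑ r ∈ Finset.range d, dFib d (d * m + (i + r) + 1 - d) := by
      rw [Finset.sum_congr rfl fun j _ => hterm j]
      exact sum_window (fun x => dFib d (d * m + x + 1 - d)) i i.isLt.le
    rw [hsum, ← Finset.sum_range_reflect, cnt, if_neg hk, ← hm]
    have hidx : ∀ r ∈ Finset.range d,
        dFib d (d * m + (i + (d - 1 - r)) + 1 - d) = dFib d (d * m + i - r) := by
      intro r hr
      rw [Finset.mem_range] at hr
      congr 1
      omega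
    rw [Finset.sum_congr rfl hidx]
    have hi := i.isLt
    rcases Nat.eq_zero_or_pos (d * m + i) with h0 | hpos
    · have hi0 : (i : ℕ) = 0 := by omega
      have hm0 : m = 0 := by
        have : d * m = 0 := by omega
        rcases Nat.mul_eq_zero.1 this with h | h <;> omega
      rw [h0, if_pos ⟨by omega, hi0⟩, Finset.sum_eq_zero]
      · rw [dFib]
      · intro r _
        rw [Nat.zero_sub, dFib]
    · rw [if_neg]
      · obtain ⟨n, hn⟩ : ∃ n, d * m + i = n + 1 := ⟨d * m + i - 1, by omega⟩
        rw [hn, dFib, add_zero]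
      · rintro ⟨h, h'⟩
        have : m = 0 := by omega
        rw [this, h'] at hpos
        simp at hpos

/-- The vertices of `S_i(k)` with the smallest letter and at least `ℓ` child edges are those of
the pieces, together with the root when it has the smallest letter and exactly `ℓ` child edges. -/
lemma exists_good_set {ℓ : ℕ} (hℓ : 1 ≤ ℓ) (k : ℕ) (i : Fin d) :
    ∃ S : Finset (List (Fin d)),
      (∀ w, w ∈ S ↔ ℓ ≤ dg w k i ∧ (lt w i : ℕ) = 0) ∧ S.card = cnt ℓ k i := by
  refine ind (P := fun k i => ∃ S : Finset (List (Fin d)),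
      (∀ w, w ∈ S ↔ ℓ ≤ dg w k i ∧ (lt w i : ℕ) = 0) ∧ S.card = cnt ℓ k i) ?_ ?_ k i
  · intro i
    refine ⟨∅, fun w => ?_, ?_⟩
    · rw [dg_zero]
      simp only [Finset.notMem_empty, false_iff]
      omega
    · rw [cnt, if_pos (by omega), Finset.card_empty]
  · intro k i ih
    choose S hS hcard using ih
    refine ⟨(Finset.univ.biUnion fun j => (S j).image (List.cons j)) ∪
      (if k + 1 = ℓ ∧ (i : ℕ) = 0 then {List.replicate (k + 1) i} else ∅), ?_, ?_⟩
    · intro w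
      simp only [Finset.mem_union, Finset.mem_biUnion, Finset.mem_univ, true_and,
        Finset.mem_image, hS]
      cases w with
      | nil =>
        have : ([] : List (Fin d)) ≠ List.replicate (k + 1) i := by simp [List.replicate_succ]
        have h2 : ¬ ℓ ≤ 0 := by omega
        split_ifs <;> simp [dg, h2, this]
      | cons a x =>
        have hl : (∃ j, ∃ y, (ℓ ≤ dg y (nx k i j) j ∧ (lt y j : ℕ) = 0) ∧ j :: y = a :: x) ↔
            ℓ ≤ dg x (nx k i a) a ∧ (lt x a : ℕ) = 0 := by
          constructor
          · rintro ⟨j, y, h, heq⟩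
            simp only [List.cons.injEq] at heq
            obtain ⟨rfl, rfl⟩ := heq
            exact h
          · intro h
            exact ⟨a, x, h, rfl⟩
        rw [hl, lt_cons]
        by_cases hr : a :: x = List.replicate (k + 1) i
        · rw [(dg_root k i a x hr).1]
          obtain ⟨rfl, rfl⟩ := cons_eq_root.1 hr
          rw [nx_self, dg_replicate, lt_replicate]
          split_ifs with hc
          · rw [hr]
            simp
            omega
          · simp only [Finset.notMem_empty, or_false]
            omega
        · have : a :: x ∉ (if k + 1 = ℓ ∧ (i : ℕ) = 0 then {List.replicate (k + 1) i} else
              (∅ : Finset (List (Fin d)))) := by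
            split_ifs <;> simp [hr]
          simp only [dg, if_neg hr, this, or_false]
    · rw [Finset.card_union_of_disjoint, Finset.card_biUnion, cnt_succ]
      · congr 1
        · refine Finset.sum_congr rfl fun j _ => ?_
          rw [Finset.card_image_of_injective _ List.cons_injective, hcard]
        · split_ifs <;> simp
      · intro a _ b _ hab
        rw [Function.onFun, Finset.disjoint_left]
        intro x hx hx'
        obtain ⟨y, -, rfl⟩ := Finset.mem_image.1 hx
        obtain ⟨z, -, hz⟩ := Finset.mem_image.1 hx'
        simp only [List.cons.injEq] at hz
        exact hab hz.1.symm
      · split_ifs with hc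
        · rw [Finset.disjoint_singleton_right]
          simp only [Finset.mem_biUnion, Finset.mem_univ, true_and, Finset.mem_image, hS]
          rintro ⟨j, y, ⟨h, -⟩, heq⟩
          obtain ⟨rfl, rfl⟩ := cons_eq_root.1 heq
          rw [nx_self, dg_replicate] at h
          omega
        · exact Finset.disjoint_empty_right _

end FibTree

theorem stmt17 (d : ℕ) (hd : 2 ≤ d) (ℓ : ℕ) (hℓ : 1 ≤ ℓ) (i : Fin d) (k : ℕ) (hk : ℓ ≤ k) :
    haveI : NeZero d := ⟨by omega⟩
    -- the number of vertices of `P_{i,ℓ}(k)` contained in at least `ℓ` edges joining them to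
    -- children of theirs, all of which are leaves, equals `F_d(d(k−ℓ)+i)` (1-based `i`)
    (Finset.filter
        (fun w => ℓ ≤
          (Finset.filter
            (fun e => w ∈ e ∧ ∀ u ∈ e, u ≠ w →
              u ∈ SChildren d k i w ∧
                IsLeafIn (prunedSEdges d k i ℓ) (SChildren d k i) u)
            (prunedSEdges d k i ℓ)).card)
        ((prunedSEdges d k i ℓ).biUnion id)).card =
      dFib d (d * (k - ℓ) + (i : ℕ) + 1) := by
  have : NeZero d := ⟨by omega⟩
  obtain ⟨S, hS, hcard⟩ := FibTree.exists_good_set hℓ k i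
  rw [FibTree.cnt, if_neg (by omega)] at hcard
  rw [← hcard]
  congr 1
  ext w
  rw [Finset.mem_filter, hS, FibTree.good_iff hd hℓ, and_iff_right_iff_imp]
  rintro ⟨h, -⟩
  have h1 : 1 ≤ FibTree.dg w k i := hℓ.trans h
  rw [Finset.mem_biUnion]
  exact ⟨_, (FibTree.mem_pruned hd).2 ⟨w, 1, le_rfl, h1, h, rfl⟩,
    FibTree.self_mem_ed le_rfl h1⟩
end
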